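/- arXiv:2209.14939 — 2 statements merged into one kernel-verified Lean document; each statement's English description precedes it below -/
import Mathlib

section
/- Fix δ ∈ (0,1/2), a real M > 0, an integer K ≥ 2 and ξ > 1. Define C₂(x) = (K/((K+1)y))·∑_{H ∈ 𝔥₁} #Q_H·H/σ_{H^M,z} and C₃(x) = (K/((K+1)y))·∑_{H ∈ 𝔥₂} #Q_H·H/σ_{H^M,z}. Then both C₂(x) and C₃(x) tend to K(ξ−1)·ln(1/(2δ)) / (2(K+1)Mξ·ln ξ) as x → ∞. -/
open scoped Classical

noncomputable def yy (δ x : ℝ) : ℕ := ⌈x * Real.log x ^ δ⌉₊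

noncomputable def zz (δ x : ℝ) : ℝ :=
  (yy δ x : ℝ) * Real.log (Real.log x) ^ 2 / Real.log x ^ (1/2 : ℝ)

noncomputable def primesUpTo (t : ℝ) : Finset ℕ :=
  (Finset.range (⌊t⌋₊ + 1)).filter fun p => p.Prime ∧ (p : ℝ) ≤ t

noncomputable def PP (t : ℝ) : ℕ := ∏ p ∈ primesUpTo t, p

noncomputable def sigUpTo (t : ℝ) : ℝ := ∏ p ∈ primesUpTo t, (1 - 1 / (p : ℝ))

noncomputable def primesBetween (w t : ℝ) : Finset ℕ :=
  (Finset.range (⌊t⌋₊ + 1)).filter fun p => p.Prime ∧ w < (p : ℝ) ∧ (p : ℝ) ≤ t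

noncomputable def sigBetween (w t : ℝ) : ℝ := ∏ p ∈ primesBetween w t, (1 - 1 / (p : ℝ))

def inS (t : ℝ) (b n : ℤ) : Prop :=
  ∀ p : ℕ, p.Prime → (p : ℝ) ≤ t → ¬ ((p : ℤ) ∣ (n - b))

def inSBetween (w t : ℝ) (b n : ℤ) : Prop :=
  ∀ p : ℕ, p.Prime → w < (p : ℝ) → (p : ℝ) ≤ t → ¬ ((p : ℤ) ∣ (n - b))

noncomputable def countS (t : ℝ) (b lo hi : ℤ) : ℕ :=
  ((Finset.Icc lo hi).filter (inS t b)).card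

noncomputable def EE (δ x : ℝ) (g : ℤ → ℝ) : ℝ :=
  (1 / (PP (zz δ x) : ℝ)) * ∑ b ∈ Finset.range (PP (zz δ x)), g (b : ℤ)

def frakH (δ ξ x : ℝ) : Set ℝ :=
  {H | ∃ j : ℕ, H = ξ ^ j ∧ 2 * (yy δ x : ℝ) / x ≤ H ∧ H ≤ (yy δ x : ℝ) / (ξ * zz δ x)}

def frakH1 (δ ξ x : ℝ) : Set ℝ :=
  {H | ∃ j : ℕ, Even j ∧ H = ξ ^ j ∧ 2 * (yy δ x : ℝ) / x ≤ H ∧ H ≤ (yy δ x : ℝ) / (ξ * zz δ x)}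

def frakH2 (δ ξ x : ℝ) : Set ℝ :=
  {H | ∃ j : ℕ, Odd j ∧ H = ξ ^ j ∧ 2 * (yy δ x : ℝ) / x ≤ H ∧ H ≤ (yy δ x : ℝ) / (ξ * zz δ x)}

noncomputable def QH (δ ξ x H : ℝ) : Finset ℕ :=
  (Finset.range (⌊(yy δ x : ℝ) / H⌋₊ + 1)).filter fun q =>
    q.Prime ∧ (yy δ x : ℝ) / (ξ * H) < (q : ℝ) ∧ (q : ℝ) ≤ (yy δ x : ℝ) / H

noncomputable def Hq (δ ξ x : ℝ) (q : ℕ) : ℝ :=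
  if h : ∃ H ∈ frakH δ ξ x, (yy δ x : ℝ) / (ξ * H) < (q : ℝ) ∧ (q : ℝ) ≤ (yy δ x : ℝ) / H
  then h.choose else 1

noncomputable def APset (M : ℝ) (K : ℕ) (b : ℤ) (H : ℝ) (q : ℕ) (n : ℤ) : Finset ℤ :=
  ((Finset.Icc 1 ⌊(K : ℝ) * H⌋₊).image fun h : ℕ => n + (q : ℤ) * (h : ℤ)).filter (inS (H ^ M) b)

noncomputable def lam (M zv : ℝ) (K : ℕ) (b : ℤ) (H : ℝ) (q : ℕ) (n : ℤ) : ℝ :=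
  if ∀ m ∈ APset M K b H q n, inSBetween (H ^ M) zv b m
  then sigBetween (H ^ M) zv ^ (-((APset M K b H q n).card : ℤ))
  else 0

noncomputable def APsetStar (M : ℝ) (K : ℕ) (N b : ℤ) (H : ℝ) (q : ℕ) (n : ℤ) : Finset ℤ :=
  ((Finset.Icc 1 ⌊(K : ℝ) * H⌋₊).image fun h : ℕ => n - (q : ℤ) * (h : ℤ)).filter (inS (H ^ M) (-N - b))

noncomputable def lamStar (M zv : ℝ) (K : ℕ) (N b : ℤ) (H : ℝ) (q : ℕ) (n : ℤ) : ℝ :=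
  if ∀ m ∈ APsetStar M K N b H q n, inSBetween (H ^ M) zv (-N - b) m
  then sigBetween (H ^ M) zv ^ (-((APsetStar M K N b H q n).card : ℤ))
  else 0

/-!
The Wiener–Ikehara theorem, applied to the logarithmic derivative of `ζ`, gives the prime number
theorem, whence `#Q_H ~ (1 - 1/ξ) (y/H) / ln (y/H)`, where `ln (y/H) ~ ln z`; Mertens' theorem gives
`1/σ_{H^M,z} ~ ln z / (M ln H)`. Hence the summand at `H = ξ ^ j`, divided by `y`, is asymptotic to
`(1 - 1/ξ) / (M j ln ξ)`, uniformly in `j`. The exponents `j` range over a window whose ends are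
asymptotic to `δ ln ln x / ln ξ` and `ln ln x / (2 ln ξ)`, and over the `j` of this window in a set
of density `d` the sum of `1/j` tends to `d ln (1/(2δ))`.
-/

open Real Filter Topology MeasureTheory FourierTransform

section FejerKernel

/-- The triangle function of half-width `l`. Its Fourier transform is the Fejér kernel
`v ↦ l * sinc (π * l * v) ^ 2`, which is nonnegative and, as `l → ∞`, concentrates at `0`. -/
noncomputable def triangle (l t : ℝ) : ℝ := max (1 - |t| / l) 0

lemma continuous_triangle (l : ℝ) : Continuous (triangle l) := by
  unfold triangle
  fun_prop

lemma triangle_neg (l t : ℝ) : triangle l (-t) = triangle l t := by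
  simp only [triangle, abs_neg]

lemma triangle_of_mem_Ioc {l t : ℝ} (ht : t ∈ Set.Ioc 0 l) : triangle l t = 1 - t / l := by
  rw [triangle, abs_of_pos ht.1, max_eq_left]
  exact sub_nonneg.mpr (div_le_one_of_le₀ ht.2 (ht.1.le.trans ht.2))

lemma triangle_of_le_abs {l t : ℝ} (hl : 0 < l) (ht : l ≤ |t|) : triangle l t = 0 :=
  max_eq_right (sub_nonpos.mpr ((one_le_div hl).mpr ht))

lemma hasCompactSupport_triangle {l : ℝ} (hl : 0 < l) : HasCompactSupport (triangle l) := by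
  refine HasCompactSupport.intro (isCompact_Icc (a := -l) (b := l)) fun t ht => ?_
  rw [Set.mem_Icc, ← abs_le, not_le] at ht
  exact triangle_of_le_abs hl ht.le

lemma integral_one_sub_div_mul_cexp (l : ℝ) {w : ℂ} (hw : w ≠ 0) :
    ∫ t in (0 : ℝ)..l, ((1 - t / l : ℝ) : ℂ) * Complex.exp (w * t) =
      (Complex.exp (w * l) - 1 - w * l) / (l * w ^ 2) := by
  rcases eq_or_ne l 0 with rfl | hl
  · simp
  have hl' : (l : ℂ) ≠ 0 := Complex.ofReal_ne_zero.mpr hl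
  have hderiv : ∀ t ∈ Set.uIcc 0 l, HasDerivAt
      (fun t : ℝ => (1 - (t : ℂ) / l) * (Complex.exp (w * t) / w) +
        Complex.exp (w * t) / (l * w ^ 2))
      (((1 - t / l : ℝ) : ℂ) * Complex.exp (w * t)) t := by
    intro t _
    have hexp : HasDerivAt (fun t : ℝ => Complex.exp (w * t)) (Complex.exp (w * t) * w) t := by
      simpa using ((Complex.ofRealCLM.hasDerivAt (x := t)).const_mul w).cexp
    have hlin : HasDerivAt (fun t : ℝ => 1 - (t : ℂ) / l) (-(1 / l)) t := by
      simpa using ((Complex.ofRealCLM.hasDerivAt (x := t)).div_const (l : ℂ)).const_sub 1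
    refine ((hlin.mul (hexp.div_const w)).add (hexp.div_const _)).congr_deriv ?_
    push_cast
    field_simp
    ring
  rw [intervalIntegral.integral_eq_sub_of_hasDerivAt hderiv
    (Continuous.intervalIntegrable (by fun_prop) _ _)]
  simp only [Complex.ofReal_zero, mul_zero, Complex.exp_zero]
  field_simp
  ring

lemma integral_triangle_mul {l : ℝ} (hl : 0 < l) {f : ℝ → ℂ} (hf : Continuous f) :
    ∫ t, (triangle l t : ℂ) * f t =
      (∫ t in (0 : ℝ)..l, ((1 - t / l : ℝ) : ℂ) * f t) +
        ∫ t in (0 : ℝ)..l, ((1 - t / l : ℝ) : ℂ) * f (-t) := by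
  have hcont : Continuous fun t => (triangle l t : ℂ) * f t :=
    (Complex.continuous_ofReal.comp (continuous_triangle l)).mul hf
  have hsupp : Function.support (fun t => (triangle l t : ℂ) * f t) ⊆ Set.Ioc (-l) l := by
    intro t ht
    have habs : |t| < l := by
      contrapose! ht
      simp [triangle_of_le_abs hl ht]
    exact ⟨(abs_lt.mp habs).1, (abs_lt.mp habs).2.le⟩
  rw [← intervalIntegral.integral_eq_integral_of_support_subset hsupp,
    ← intervalIntegral.integral_add_adjacent_intervals (hcont.intervalIntegrable _ 0)
      (hcont.intervalIntegrable _ _), add_comm]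
  have hneg := intervalIntegral.integral_comp_neg (a := 0) (b := l)
    fun t => (triangle l t : ℂ) * f t
  rw [neg_zero] at hneg
  rw [← hneg, intervalIntegral.integral_of_le hl.le, intervalIntegral.integral_of_le hl.le,
    intervalIntegral.integral_of_le hl.le, intervalIntegral.integral_of_le hl.le]
  congr 1 <;>
  exact setIntegral_congr_fun measurableSet_Ioc fun t ht => by
    simp only [triangle_neg, triangle_of_mem_Ioc ht]

lemma integral_triangle {l : ℝ} (hl : 0 < l) : ∫ t, (triangle l t : ℂ) = l := by
  have h := integral_triangle_mul hl (f := fun _ => 1) continuous_const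
  simp only [mul_one] at h
  rw [h, intervalIntegral.integral_ofReal, ← Complex.ofReal_add]
  congr 1
  rw [intervalIntegral.integral_sub (by simp) (Continuous.intervalIntegrable (by fun_prop) _ _),
    intervalIntegral.integral_div, integral_id]
  simp only [intervalIntegral.integral_const, smul_eq_mul]
  field_simp
  ring

lemma integral_triangle_mul_cexp {l : ℝ} (hl : 0 < l) {w : ℂ} (hw : w ≠ 0) :
    ∫ t, (triangle l t : ℂ) * Complex.exp (w * t) =
      (Complex.exp (w * l) + Complex.exp (-w * l) - 2) / (l * w ^ 2) := by
  have hneg := integral_one_sub_div_mul_cexp l (neg_ne_zero.mpr hw)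
  rw [neg_sq] at hneg
  rw [integral_triangle_mul hl (by fun_prop), integral_one_sub_div_mul_cexp l hw]
  simp only [Complex.ofReal_neg, mul_neg, ← neg_mul]
  rw [hneg, ← add_div]
  ring

lemma fourier_triangle {l : ℝ} (hl : 0 < l) (v : ℝ) :
    𝓕 (fun t => (triangle l t : ℂ)) v = ((l * sinc (π * (l * v)) ^ 2 : ℝ) : ℂ) := by
  rcases eq_or_ne v 0 with rfl | hv
  · simp [Real.fourier_eq', integral_triangle hl]
  have hw : ((-2 * π * v : ℝ) : ℂ) * Complex.I ≠ 0 := by simp [hv, pi_ne_zero]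
  have hfourier : 𝓕 (fun t => (triangle l t : ℂ)) v =
      ∫ t, (triangle l t : ℂ) * Complex.exp (((-2 * π * v : ℝ) : ℂ) * Complex.I * t) := by
    rw [fourier_real_eq_integral_exp_smul]
    refine integral_congr_ae (ae_of_all _ fun t => ?_)
    simp only [smul_eq_mul]
    rw [mul_comm]
    push_cast
    ring_nf
  have hcos : Complex.exp (((-2 * π * v : ℝ) : ℂ) * Complex.I * l) +
      Complex.exp (-(((-2 * π * v : ℝ) : ℂ) * Complex.I) * l) - 2 =
      -(4 * (sin (π * (l * v)) : ℂ) ^ 2) := by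
    have hdouble : (cos (2 * (π * (l * v))) : ℂ) = 1 - 2 * (sin (π * (l * v)) : ℂ) ^ 2 := by
      rw [cos_two_mul', cos_sq']
      push_cast
      ring
    have hexp := Complex.two_cos (2 * (π * (l * v)) : ℂ)
    rw [Complex.ofReal_cos] at hdouble
    push_cast at hexp hdouble ⊢
    rw [hdouble] at hexp
    ring_nf at hexp ⊢
    linear_combination -hexp
  rw [hfourier, integral_triangle_mul_cexp hl hw, hcos, mul_pow, Complex.I_sq,
    sinc_of_ne_zero (mul_ne_zero pi_ne_zero (mul_ne_zero hl.ne' hv))]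
  push_cast
  have hl' : (l : ℂ) ≠ 0 := Complex.ofReal_ne_zero.mpr hl.ne'
  have hv' : (v : ℂ) ≠ 0 := Complex.ofReal_ne_zero.mpr hv
  field_simp
  ring

lemma sinc_sq_le (x : ℝ) : sinc x ^ 2 ≤ 2 * (1 + x ^ 2)⁻¹ := by
  rw [← div_eq_mul_inv, le_div_iff₀ (by positivity)]
  have hone : sinc x ^ 2 ≤ 1 := sq_le_one_iff_abs_le_one _ |>.mpr (abs_sinc_le_one x)
  have hsin : (sinc x * x) ^ 2 ≤ 1 := by
    rcases eq_or_ne x 0 with rfl | hx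
    · simp
    · rw [sinc_of_ne_zero hx, div_mul_cancel₀ _ hx]
      exact sin_sq_le_one x
  linarith

lemma integrable_sinc_sq : Integrable fun x => sinc x ^ 2 := by
  refine (integrable_inv_one_add_sq.const_mul 2).mono'
    (continuous_sinc.pow 2).aestronglyMeasurable (ae_of_all _ fun x => ?_)
  rw [norm_of_nonneg (sq_nonneg _)]
  exact sinc_sq_le x

lemma integrable_sinc_pi_mul_sq : Integrable fun x => sinc (π * x) ^ 2 :=
  integrable_sinc_sq.comp_mul_left' pi_ne_zero

lemma integral_sinc_pi_mul_sq_pos : 0 < ∫ x, sinc (π * x) ^ 2 :=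
  integral_pos_of_integrable_nonneg_nonzero (x := 0) (by fun_prop) integrable_sinc_pi_mul_sq
    (fun _ => sq_nonneg _) (by simp)

end FejerKernel

section Tauberian

lemma tendsto_mul_integral_comp_mul {g : ℝ → ℝ} (hg : Integrable g) {a : ℝ} (ha : 0 < a) :
    Tendsto (fun l => ∫ v in (-a)..a, l * g (l * v)) atTop (𝓝 (∫ v, g v)) := by
  have hlim := intervalIntegral_tendsto_integral hg
    (tendsto_neg_atTop_atBot.comp (tendsto_id.atTop_mul_const ha))
    (tendsto_id.atTop_mul_const ha)
  refine hlim.congr fun l => ?_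
  rw [intervalIntegral.integral_const_mul, intervalIntegral.mul_integral_comp_mul_left]
  simp only [Function.comp_apply, id, mul_neg]

lemma integral_mul_comp_mul (g : ℝ → ℝ) {l : ℝ} (hl : 0 < l) :
    ∫ v, l * g (l * v) = ∫ v, g v := by
  rw [integral_const_mul, Measure.integral_comp_mul_left, abs_of_pos (inv_pos.mpr hl),
    smul_eq_mul, mul_inv_cancel_left₀ hl.ne']

section Mean

variable {B k : ℝ → ℝ} {C b a T : ℝ}

lemma integrable_mul_comp_sub (hB : Measurable B) (hB0 : ∀ u, 0 ≤ B u) (hBC : ∀ u, B u ≤ C)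
    (hk : Integrable k) (T : ℝ) : Integrable fun u => B u * k (u - T) :=
  (hk.comp_sub_right T).bdd_mul (c := C) hB.aestronglyMeasurable (ae_of_all _ fun u => by
    rw [norm_of_nonneg (hB0 u)]; exact hBC u)

lemma mul_integral_window_le_mean (hB : Measurable B) (hB0 : ∀ u, 0 ≤ B u) (hBC : ∀ u, B u ≤ C)
    (hk : Integrable k) (hk0 : ∀ v, 0 ≤ k v) (ha : 0 ≤ a)
    (hb : ∀ u ∈ Set.Icc (T - a) (T + a), b ≤ B u) :
    b * ∫ v in (-a)..a, k v ≤ ∫ u, B u * k (u - T) := by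
  have hint := integrable_mul_comp_sub hB hB0 hBC hk T
  calc b * ∫ v in (-a)..a, k v = ∫ u in (T - a)..(T + a), b * k (u - T) := by
        rw [intervalIntegral.integral_const_mul, intervalIntegral.integral_comp_sub_right,
          sub_sub_cancel_left, add_sub_cancel_left]
    _ ≤ ∫ u in (T - a)..(T + a), B u * k (u - T) :=
        intervalIntegral.integral_mono_on (by linarith)
          ((hk.comp_sub_right T).const_mul b).intervalIntegrable hint.intervalIntegrable
          fun u hu => mul_le_mul_of_nonneg_right (hb u hu) (hk0 _)
    _ ≤ ∫ u, B u * k (u - T) := by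
        rw [intervalIntegral.integral_of_le (by linarith)]
        exact setIntegral_le_integral hint (ae_of_all _ fun u => mul_nonneg (hB0 u) (hk0 _))

lemma mean_le_mul_integral_window_add (hB : Measurable B) (hB0 : ∀ u, 0 ≤ B u)
    (hBC : ∀ u, B u ≤ C) (hk : Integrable k) (hk0 : ∀ v, 0 ≤ k v) (ha : 0 ≤ a)
    (hb : ∀ u ∈ Set.Icc (T - a) (T + a), B u ≤ b) :
    ∫ u, B u * k (u - T) ≤
      b * (∫ v in (-a)..a, k v) + C * ((∫ v, k v) - ∫ v in (-a)..a, k v) := by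
  have hcompl := mul_integral_window_le_mean (B := fun u => C - B u) (T := T) (by fun_prop)
    (fun u => sub_nonneg.mpr (hBC u)) (fun u => sub_le_self C (hB0 u)) hk hk0 ha
    (fun u hu => sub_le_sub_left (hb u hu) C)
  have hsub : ∫ u, (C - B u) * k (u - T) = C * (∫ v, k v) - ∫ u, B u * k (u - T) := by
    simp_rw [sub_mul]
    rw [integral_sub ((hk.comp_sub_right T).const_mul C)
      (integrable_mul_comp_sub hB hB0 hBC hk T), integral_const_mul,
      integral_sub_right_eq_self k]
  linarith

end Mean

section SlowDecrease

variable {B g : ℝ → ℝ} {C c : ℝ}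

lemma le_exp_sub_mul_of_monotone_exp_mul (hmono : Monotone fun u => exp u * B u) {u w : ℝ}
    (huw : u ≤ w) : B u ≤ exp (w - u) * B w := by
  rw [exp_sub, div_mul_eq_mul_div, le_div_iff₀' (exp_pos u)]
  exact hmono huw

lemma measurable_of_monotone_exp_mul (hmono : Monotone fun u => exp u * B u) : Measurable B := by
  have hB : B = fun u => exp (-u) * (exp u * B u) := by
    funext u
    rw [← mul_assoc, ← exp_add, neg_add_cancel, exp_zero, one_mul]
  rw [hB]
  exact (by fun_prop : Measurable fun u => exp (-u)).mul hmono.measurable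

-- Since `exp u * B u` is monotone, a small `B T` forces `B` to be small on `[T - 2a, T]`, so the
-- mean centred at `T - a` is too small once the kernel is concentrated on a window of width `2a`.
lemma eventually_lt_of_tendsto_means (hmono : Monotone fun u => exp u * B u)
    (hB0 : ∀ u, 0 ≤ B u) (hBC : ∀ u, B u ≤ C) (hg : Integrable g) (hg0 : ∀ v, 0 ≤ g v)
    (hgpos : 0 < ∫ v, g v)
    (hmean : ∀ l > 0, Tendsto (fun T => ∫ u, B u * (l * g (l * (u - T)))) atTop
      (𝓝 (c * ∫ v, g v))) {b : ℝ} (hb : b < c) : ∀ᶠ T in atTop, b < B T := by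
  set m := ∫ v, g v
  obtain ⟨a, hab, ha⟩ : ∃ a, exp (2 * a) * b < c ∧ 0 < a := by
    have hcont : Tendsto (fun a : ℝ => exp (2 * a) * b) (𝓝[>] 0) (𝓝 (exp (2 * 0) * b)) :=
      (Continuous.tendsto (by fun_prop) 0).mono_left nhdsWithin_le_nhds
    rw [mul_zero, exp_zero, one_mul] at hcont
    exact ((hcont.eventually_lt_const hb).and self_mem_nhdsWithin).exists
  obtain ⟨l, hl, hl0⟩ : ∃ l, exp (2 * a) * b * (∫ v in (-a)..a, l * g (l * v)) +
      C * (m - ∫ v in (-a)..a, l * g (l * v)) < c * m ∧ 0 < l := by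
    have hwin := tendsto_mul_integral_comp_mul hg ha
    have hlim := (hwin.const_mul (exp (2 * a) * b)).add ((hwin.const_sub m).const_mul C)
    rw [sub_self, mul_zero, add_zero] at hlim
    exact ((hlim.eventually_lt_const (mul_lt_mul_of_pos_right hab hgpos)).and
      (eventually_gt_atTop 0)).exists
  have hev := (tendsto_atTop_add_const_right atTop (-a) tendsto_id).eventually
    ((hmean l hl0).eventually_const_lt hl)
  filter_upwards [hev] with T hT
  have hwindow : ∀ u ∈ Set.Icc (T + -a - a) (T + -a + a), B u ≤ exp (2 * a) * B T := by
    intro u hu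
    refine (le_exp_sub_mul_of_monotone_exp_mul (w := T) hmono (by linarith [hu.2])).trans ?_
    exact mul_le_mul_of_nonneg_right (exp_le_exp.mpr (by linarith [hu.1])) (hB0 T)
  have hupper := mean_le_mul_integral_window_add (measurable_of_monotone_exp_mul hmono) hB0 hBC
    ((hg.comp_mul_left' hl0.ne').const_mul l) (fun v => mul_nonneg hl0.le (hg0 _)) ha.le hwindow
  rw [integral_mul_comp_mul g hl0] at hupper
  have hwin0 : 0 ≤ ∫ v in (-a)..a, l * g (l * v) :=
    intervalIntegral.integral_nonneg (by linarith) fun v _ => mul_nonneg hl0.le (hg0 _)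
  have hlt := lt_of_add_lt_add_right (hT.trans_le hupper)
  exact lt_of_mul_lt_mul_left (lt_of_mul_lt_mul_right hlt hwin0) (exp_pos _).le

lemma eventually_gt_of_tendsto_means (hmono : Monotone fun u => exp u * B u)
    (hB0 : ∀ u, 0 ≤ B u) (hBC : ∀ u, B u ≤ C) (hg : Integrable g) (hg0 : ∀ v, 0 ≤ g v)
    (hgpos : 0 < ∫ v, g v)
    (hmean : ∀ l > 0, Tendsto (fun T => ∫ u, B u * (l * g (l * (u - T)))) atTop
      (𝓝 (c * ∫ v, g v))) {b : ℝ} (hb : c < b) : ∀ᶠ T in atTop, B T < b := by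
  set m := ∫ v, g v
  obtain ⟨a, hab, ha⟩ : ∃ a, c < exp (-(2 * a)) * b ∧ 0 < a := by
    have hcont : Tendsto (fun a : ℝ => exp (-(2 * a)) * b) (𝓝[>] 0)
        (𝓝 (exp (-(2 * 0)) * b)) :=
      (Continuous.tendsto (by fun_prop) 0).mono_left nhdsWithin_le_nhds
    rw [mul_zero, neg_zero, exp_zero, one_mul] at hcont
    exact ((hcont.eventually_const_lt hb).and self_mem_nhdsWithin).exists
  obtain ⟨l, hl, hl0⟩ :
      ∃ l, c * m < exp (-(2 * a)) * b * (∫ v in (-a)..a, l * g (l * v)) ∧ 0 < l :=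
    ((((tendsto_mul_integral_comp_mul hg ha).const_mul _).eventually_const_lt
      (mul_lt_mul_of_pos_right hab hgpos)).and (eventually_gt_atTop 0)).exists
  have hev := (tendsto_atTop_add_const_right atTop a tendsto_id).eventually
    ((hmean l hl0).eventually_lt_const hl)
  filter_upwards [hev] with T hT
  have hwindow : ∀ u ∈ Set.Icc (T + a - a) (T + a + a), exp (-(2 * a)) * B T ≤ B u := by
    intro u hu
    rw [exp_neg, inv_mul_le_iff₀ (exp_pos _)]
    refine (le_exp_sub_mul_of_monotone_exp_mul (u := T) (w := u) hmono
      (by linarith [hu.1])).trans ?_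
    exact mul_le_mul_of_nonneg_right (exp_le_exp.mpr (by linarith [hu.2])) (hB0 u)
  have hlower := mul_integral_window_le_mean (measurable_of_monotone_exp_mul hmono) hB0 hBC
    ((hg.comp_mul_left' hl0.ne').const_mul l) (fun v => mul_nonneg hl0.le (hg0 _)) ha.le hwindow
  have hwin0 : 0 ≤ ∫ v in (-a)..a, l * g (l * v) :=
    intervalIntegral.integral_nonneg (by linarith) fun v _ => mul_nonneg hl0.le (hg0 _)
  have hlt := lt_of_mul_lt_mul_right (hlower.trans_lt hT) hwin0
  exact lt_of_mul_lt_mul_left hlt (exp_pos _).le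

lemma tendsto_of_tendsto_means (hmono : Monotone fun u => exp u * B u)
    (hB0 : ∀ u, 0 ≤ B u) (hBC : ∀ u, B u ≤ C) (hg : Integrable g) (hg0 : ∀ v, 0 ≤ g v)
    (hgpos : 0 < ∫ v, g v)
    (hmean : ∀ l > 0, Tendsto (fun T => ∫ u, B u * (l * g (l * (u - T)))) atTop
      (𝓝 (c * ∫ v, g v))) : Tendsto B atTop (𝓝 c) :=
  tendsto_order.mpr ⟨fun _ => eventually_lt_of_tendsto_means hmono hB0 hBC hg hg0 hgpos hmean,
    fun _ => eventually_gt_of_tendsto_means hmono hB0 hBC hg hg0 hgpos hmean⟩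

end SlowDecrease

end Tauberian

section BoundaryBehaviour

lemma integral_mul_fourier_comp_sub {g φ : ℝ → ℂ} (hg : Integrable g) (hφ : Integrable φ)
    (T : ℝ) : ∫ u, g u * 𝓕 φ (u - T) = ∫ t, 𝐞 (t * T) • (φ t * 𝓕 g t) := by
  have hshift (t : ℝ) : 𝓕 (fun u => g (u + T)) t = 𝐞 (t * T) • 𝓕 g t := by
    simpa using! congrFun
      (VectorFourier.fourierIntegral_comp_add_right 𝐞 volume (innerₗ ℝ) g T) t
  calc ∫ u, g u * 𝓕 φ (u - T) = ∫ u, 𝓕 φ u • g (u + T) := by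
        rw [← integral_add_right_eq_self _ T]
        simp only [add_sub_cancel_right, smul_eq_mul, mul_comm]
    _ = ∫ t, φ t • 𝓕 (fun u => g (u + T)) t := by
        simpa using! VectorFourier.integral_fourierIntegral_smul_eq_flip (L := innerₗ ℝ)
          continuous_fourierChar continuous_inner hφ (hg.comp_add_right T)
    _ = ∫ t, 𝐞 (t * T) • (φ t * 𝓕 g t) := by
        simp only [hshift, smul_eq_mul, mul_smul_comm]

variable {D φ : ℝ → ℂ} {G : ℂ → ℂ} {C : ℝ}

lemma fourier_indicator_mul_exp_neg (D : ℝ → ℂ) (ε t : ℝ) :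
    𝓕 ((Set.Ioi 0).indicator fun u => D u * Complex.exp (-(ε * u))) t =
      ∫ u in Set.Ioi (0 : ℝ), D u * Complex.exp (-((ε + 2 * π * t * Complex.I) * u)) := by
  rw [fourier_real_eq_integral_exp_smul, ← integral_indicator measurableSet_Ioi]
  refine integral_congr_ae (ae_of_all _ fun u => ?_)
  by_cases hu : u ∈ Set.Ioi 0
  · simp only [Set.indicator_of_mem hu, smul_eq_mul]
    rw [mul_left_comm, ← Complex.exp_add]
    push_cast
    ring_nf
  · simp only [Set.indicator_of_notMem hu, smul_zero]

lemma integrable_indicator_mul_exp_neg (hD : Measurable D) (hDC : ∀ u, ‖D u‖ ≤ C) {ε : ℝ}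
    (hε : 0 < ε) :
    Integrable ((Set.Ioi 0).indicator fun u : ℝ => D u * Complex.exp (-(ε * u))) := by
  rw [integrable_indicator_iff measurableSet_Ioi]
  refine Integrable.bdd_mul (c := C) ?_ hD.aestronglyMeasurable (ae_of_all _ hDC)
  simpa only [IntegrableOn, neg_mul] using
    integrableOn_exp_mul_complex_Ioi (a := -(ε : ℂ)) (by simpa using hε) 0

lemma continuousOn_integral_fourierChar_smul_mul (hG : ContinuousOn G {w | 0 ≤ w.re})
    (hφ : Continuous φ) (hφc : HasCompactSupport φ) (T : ℝ) :
    ContinuousOn (fun ε : ℝ => ∫ t : ℝ, 𝐞 (t * T) • (φ t * G (ε + 2 * π * t * Complex.I)))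
      (Set.Ici 0) := by
  refine continuousOn_integral_of_compact_support hφc ?_ fun ε t _ ht => ?_
  · have hGcomp : ContinuousOn
        (fun p : ℝ × ℝ => G (p.1 + 2 * π * p.2 * Complex.I)) (Set.Ici 0 ×ˢ Set.univ) :=
      hG.comp (by fun_prop) fun p hp => by simpa using hp.1
    exact ContinuousOn.smul (f := fun p : ℝ × ℝ => 𝐞 (p.2 * T)) (by fun_prop)
      ((by fun_prop : Continuous fun p : ℝ × ℝ => φ p.2).continuousOn.mul hGcomp)
  · rw [image_eq_zero_of_notMem_tsupport ht, zero_mul, smul_zero]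

lemma tendsto_integral_mul_exp_neg_mul {F : ℝ → ℂ} (hD : Measurable D) (hDC : ∀ u, ‖D u‖ ≤ C)
    (hF : Integrable F) :
    Tendsto (fun ε : ℝ => ∫ u in Set.Ioi (0 : ℝ), D u * Complex.exp (-(ε * u)) * F u) (𝓝[>] 0)
      (𝓝 (∫ u in Set.Ioi (0 : ℝ), D u * F u)) := by
  refine tendsto_integral_filter_of_dominated_convergence (fun u => C * ‖F u‖) ?_ ?_
    (hF.norm.const_mul C).integrableOn (ae_of_all _ fun u => ?_)
  · exact Eventually.of_forall fun ε =>
      ((hD.mul (by fun_prop)).aestronglyMeasurable.mul hF.1.restrict)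
  · filter_upwards [self_mem_nhdsWithin] with ε hε
    filter_upwards [ae_restrict_mem measurableSet_Ioi] with u hu
    have hexp : ‖Complex.exp (-(ε * u))‖ ≤ 1 := by
      rw [Complex.norm_exp, exp_le_one_iff]
      simpa using (mul_pos (Set.mem_Ioi.mp hε) (Set.mem_Ioi.mp hu)).le
    rw [norm_mul, norm_mul]
    calc ‖D u‖ * ‖Complex.exp (-(ε * u))‖ * ‖F u‖ ≤ C * 1 * ‖F u‖ := by
          gcongr
          · exact (norm_nonneg _).trans (hDC u)
          · exact hDC u
      _ = C * ‖F u‖ := by rw [mul_one]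
  · have hcont : Continuous fun ε : ℝ => D u * Complex.exp (-(ε * u)) * F u := by fun_prop
    simpa using (hcont.tendsto 0).mono_left nhdsWithin_le_nhds

lemma integral_mul_fourier_comp_sub_eq (hD : Measurable D) (hDC : ∀ u, ‖D u‖ ≤ C)
    (hG : ContinuousOn G {w | 0 ≤ w.re})
    (hL : ∀ w : ℂ, 0 < w.re → ∫ u in Set.Ioi (0 : ℝ), D u * Complex.exp (-(w * u)) = G w)
    (hφ : Continuous φ) (hφc : HasCompactSupport φ) (hφint : Integrable (𝓕 φ)) (T : ℝ) :
    ∫ u in Set.Ioi (0 : ℝ), D u * 𝓕 φ (u - T) =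
      ∫ t : ℝ, 𝐞 (t * T) • (φ t * G (2 * π * t * Complex.I)) := by
  have hleft := tendsto_integral_mul_exp_neg_mul hD hDC (hφint.comp_sub_right T)
  have hright := ((continuousOn_integral_fourierChar_smul_mul hG hφ hφc T) 0
    Set.self_mem_Ici).mono_left (nhdsWithin_mono 0 Set.Ioi_subset_Ici_self)
  simp only [Complex.ofReal_zero, zero_add] at hright
  refine tendsto_nhds_unique hleft (hright.congr' ?_)
  filter_upwards [self_mem_nhdsWithin] with ε hε
  have hG_eq (t : ℝ) : G (ε + 2 * π * t * Complex.I) =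
      𝓕 ((Set.Ioi 0).indicator fun u => D u * Complex.exp (-(ε * u))) t := by
    rw [fourier_indicator_mul_exp_neg, hL _ (by simpa using hε)]
  simp only [hG_eq]
  rw [← integral_mul_fourier_comp_sub (integrable_indicator_mul_exp_neg hD hDC hε)
    (hφ.integrable_of_hasCompactSupport hφc), ← integral_indicator measurableSet_Ioi]
  simp only [Set.indicator_mul_left]

lemma tendsto_integral_mul_fourier_comp_sub (hD : Measurable D) (hDC : ∀ u, ‖D u‖ ≤ C)
    (hG : ContinuousOn G {w | 0 ≤ w.re})
    (hL : ∀ w : ℂ, 0 < w.re → ∫ u in Set.Ioi (0 : ℝ), D u * Complex.exp (-(w * u)) = G w)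
    (hφ : Continuous φ) (hφc : HasCompactSupport φ) (hφint : Integrable (𝓕 φ)) :
    Tendsto (fun T : ℝ => ∫ u in Set.Ioi (0 : ℝ), D u * 𝓕 φ (u - T)) atTop (𝓝 0) := by
  have hRL := (Real.tendsto_integral_exp_smul_cocompact
    fun t : ℝ => φ t * G (2 * π * t * Complex.I)).comp
      (tendsto_neg_atTop_atBot.mono_right atBot_le_cocompact)
  refine hRL.congr fun T => ?_
  simp only [Function.comp_apply, mul_neg, neg_neg]
  exact (integral_mul_fourier_comp_sub_eq hD hDC hG hL hφ hφc hφint T).symm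

end BoundaryBehaviour

section WienerIkehara

lemma tendsto_setIntegral_Ioi_comp_sub {k : ℝ → ℝ} (hk : Integrable k) :
    Tendsto (fun T => ∫ u in Set.Ioi 0, k (u - T)) atTop (𝓝 (∫ v, k v)) := by
  have hcover := (aecover_Ioi (μ := volume) (tendsto_neg_atTop_atBot (G := ℝ)))
  refine (hcover.integral_tendsto_of_countably_generated hk).congr fun T => ?_
  have hpre : (fun u => u - T) ⁻¹' Set.Ioi (-T) = Set.Ioi 0 := by
    rw [Set.preimage_sub_const_Ioi, neg_add_cancel]
  rw [← hpre, (measurePreserving_sub_right volume T).setIntegral_preimage_emb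
    (measurableEmbedding_subRight T)]

variable {A : ℝ → ℝ} {F : ℂ → ℂ} {C c : ℝ}

lemma integral_mul_exp_neg_sub (hAmeas : Measurable A) (hA0 : ∀ u, 0 ≤ A u)
    (hAC : ∀ u, A u ≤ C * exp u)
    (hL : ∀ s : ℂ, 1 < s.re →
      ∫ u in Set.Ioi (0 : ℝ), (A u : ℂ) * Complex.exp (-(s * u)) = c / (s - 1) + F s)
    {w : ℂ} (hw : 0 < w.re) :
    ∫ u in Set.Ioi (0 : ℝ), ((A u * exp (-u) - c : ℝ) : ℂ) * Complex.exp (-(w * u)) =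
      F (1 + w) := by
  have hw0 : w ≠ 0 := fun h => by simp [h] at hw
  have hexp : IntegrableOn (fun u : ℝ => Complex.exp (-w * u)) (Set.Ioi 0) :=
    integrableOn_exp_mul_complex_Ioi (by simpa using hw) 0
  have hAexp : IntegrableOn (fun u : ℝ => ((A u * exp (-u) : ℝ) : ℂ) * Complex.exp (-w * u))
      (Set.Ioi 0) := by
    refine hexp.bdd_mul (c := C) (by fun_prop) (ae_of_all _ fun u => ?_)
    rw [Complex.norm_real, norm_of_nonneg (mul_nonneg (hA0 u) (exp_pos _).le), exp_neg,
      ← div_eq_mul_inv, div_le_iff₀ (exp_pos u)]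
    exact hAC u
  have hsplit (u : ℝ) : ((A u * exp (-u) - c : ℝ) : ℂ) * Complex.exp (-(w * u)) =
      ((A u * exp (-u) : ℝ) : ℂ) * Complex.exp (-w * u) - c * Complex.exp (-w * u) := by
    push_cast
    ring_nf
  have hshift (u : ℝ) : ((A u * exp (-u) : ℝ) : ℂ) * Complex.exp (-w * u) =
      A u * Complex.exp (-((1 + w) * u)) := by
    push_cast
    rw [mul_assoc, ← Complex.exp_add]
    ring_nf
  simp only [hsplit]
  rw [integral_sub hAexp (hexp.const_mul _), integral_const_mul,
    integral_exp_mul_complex_Ioi (by simpa using hw)]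
  simp only [hshift]
  rw [hL (1 + w) (by simpa using hw)]
  rw [Complex.ofReal_zero, mul_zero, Complex.exp_zero, add_sub_cancel_left]
  field_simp
  ring

lemma tendsto_means_of_laplace_eq (hAmeas : Measurable A) (hA0 : ∀ u, 0 ≤ A u)
    (hAC : ∀ u, A u ≤ C * exp u) (hF : ContinuousOn F {s | 1 ≤ s.re})
    (hL : ∀ s : ℂ, 1 < s.re →
      ∫ u in Set.Ioi (0 : ℝ), (A u : ℂ) * Complex.exp (-(s * u)) = c / (s - 1) + F s)
    {l : ℝ} (hl : 0 < l) :
    Tendsto (fun T => ∫ u in Set.Ioi 0,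
        A u * exp (-u) * (l * sinc (π * (l * (u - T))) ^ 2)) atTop
      (𝓝 (c * ∫ v, sinc (π * v) ^ 2)) := by
  have hk : Integrable fun v => l * sinc (π * (l * v)) ^ 2 :=
    (integrable_sinc_pi_mul_sq.comp_mul_left' hl.ne').const_mul l
  have hbound (u : ℝ) : ‖A u * exp (-u) - c‖ ≤ C + |c| := by
    refine (norm_sub_le _ _).trans (add_le_add_left ?_ _)
    rw [norm_of_nonneg (mul_nonneg (hA0 u) (exp_pos _).le), exp_neg, ← div_eq_mul_inv,
      div_le_iff₀ (exp_pos u)]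
    exact hAC u
  have hzero : Tendsto (fun T => ∫ u in Set.Ioi 0,
      (A u * exp (-u) - c) * (l * sinc (π * (l * (u - T))) ^ 2)) atTop (𝓝 0) := by
    have hcomplex := tendsto_integral_mul_fourier_comp_sub
      (D := fun u => ((A u * exp (-u) - c : ℝ) : ℂ)) (φ := fun t => (triangle l t : ℂ))
      (by fun_prop) (fun u => (Complex.norm_real _).trans_le (hbound u))
      (hF.comp (by fun_prop) fun w hw => by simpa using hw)
      (fun w hw => integral_mul_exp_neg_sub hAmeas hA0 hAC hL hw)
      (Complex.continuous_ofReal.comp (continuous_triangle l))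
      ((hasCompactSupport_triangle hl).comp_left Complex.ofReal_zero)
      (by rw [funext (fourier_triangle hl)]; exact hk.ofReal)
    simp only [fourier_triangle hl, ← Complex.ofReal_mul] at hcomplex
    refine ((Complex.continuous_re.tendsto 0).comp hcomplex).congr fun T => ?_
    exact (congrArg Complex.re integral_ofReal).trans (Complex.ofReal_re _)
  have hone := (tendsto_setIntegral_Ioi_comp_sub hk).const_mul c
  rw [integral_mul_comp_mul (fun v => sinc (π * v) ^ 2) hl] at hone
  have hsum := hzero.add hone
  rw [zero_add] at hsum
  refine hsum.congr fun T => ?_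
  have hkT : IntegrableOn (fun u => l * sinc (π * (l * (u - T))) ^ 2) (Set.Ioi 0) :=
    (hk.comp_sub_right T).integrableOn
  rw [← integral_const_mul, ← integral_add (hkT.bdd_mul (by fun_prop) (ae_of_all _ hbound))
    (hkT.const_mul c)]
  simp only [← add_mul, sub_add_cancel]

theorem tendsto_mul_exp_neg_of_laplace_eq (hA : Monotone A) (hA0 : ∀ u < 0, A u = 0)
    (hAC : ∀ u, A u ≤ C * exp u) (hF : ContinuousOn F {s | 1 ≤ s.re})
    (hL : ∀ s : ℂ, 1 < s.re →
      ∫ u in Set.Ioi (0 : ℝ), (A u : ℂ) * Complex.exp (-(s * u)) = c / (s - 1) + F s) :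
    Tendsto (fun u => A u * exp (-u)) atTop (𝓝 c) := by
  have hnonneg (u : ℝ) : 0 ≤ A u := by
    rw [← hA0 (min u (-1)) (min_lt_of_right_lt (by norm_num))]
    exact hA (min_le_left _ _)
  refine tendsto_of_tendsto_means (C := C) (g := fun v => sinc (π * v) ^ 2) ?_
    (fun u => mul_nonneg (hnonneg u) (exp_pos _).le) (fun u => ?_) integrable_sinc_pi_mul_sq
    (fun _ => sq_nonneg _) integral_sinc_pi_mul_sq_pos fun l hl => ?_
  · simpa only [mul_left_comm, ← exp_add, add_neg_cancel, exp_zero, mul_one] using hA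
  · rw [exp_neg, ← div_eq_mul_inv, div_le_iff₀ (exp_pos u)]
    exact hAC u
  · refine (tendsto_means_of_laplace_eq hA.measurable hnonneg hAC hF hL hl).congr fun T => ?_
    rw [← integral_Ici_eq_integral_Ioi]
    refine setIntegral_eq_integral_of_forall_compl_eq_zero fun u hu => ?_
    rw [hA0 u (not_le.mp hu), zero_mul, zero_mul]

end WienerIkehara

section DirichletSeries

variable {f : ℕ → ℝ} {C c : ℝ}

lemma LSeries_eq_mul_integral_exp (hf0 : ∀ n, 0 ≤ f n)
    (hf : ∀ n : ℕ, ∑ k ∈ Finset.Icc 1 n, f k ≤ C * n) {s : ℂ} (hs : 1 < s.re) :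
    LSeries (fun n => (f n : ℂ)) s = s * ∫ u in Set.Ioi (0 : ℝ),
      ((∑ k ∈ Finset.Icc 1 ⌊exp u⌋₊, f k : ℝ) : ℂ) * Complex.exp (-(s * u)) := by
  have hO : (fun n : ℕ => ∑ k ∈ Finset.Icc 1 n, f k) =O[atTop] fun n : ℕ => (n : ℝ) ^ (1 : ℝ) := by
    refine Asymptotics.IsBigO.of_bound C (Eventually.of_forall fun n => ?_)
    rw [norm_of_nonneg (Finset.sum_nonneg fun k _ => hf0 k), rpow_one,
      norm_of_nonneg n.cast_nonneg]
    exact hf n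
  rw [LSeries_eq_mul_integral_of_nonneg f zero_le_one hs hO hf0, ← exp_zero,
    ← integral_comp_exp_Ioi]
  congr 1
  refine integral_congr_ae (ae_of_all _ fun u => ?_)
  simp only
  rw [Complex.real_smul, Complex.cpow_def_of_ne_zero
    (Complex.ofReal_ne_zero.mpr (exp_pos u).ne'), ← Complex.ofReal_log (exp_pos u).le, log_exp,
    Complex.ofReal_exp, mul_left_comm, ← Complex.exp_add]
  push_cast
  ring_nf

theorem tendsto_sum_div_of_LSeries_eq {F : ℂ → ℂ} (hf0 : ∀ n, 0 ≤ f n)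
    (hf : ∀ n : ℕ, ∑ k ∈ Finset.Icc 1 n, f k ≤ C * n) (hF : ContinuousOn F {s | 1 ≤ s.re})
    (hL : ∀ s : ℂ, 1 < s.re → LSeries (fun n => (f n : ℂ)) s = c / (s - 1) + F s) :
    Tendsto (fun x : ℝ => (∑ k ∈ Finset.Icc 1 ⌊x⌋₊, f k) / x) atTop (𝓝 c) := by
  have hC : 0 ≤ C := by simpa using (hf0 1).trans (by simpa using hf 1)
  have hexp := tendsto_mul_exp_neg_of_laplace_eq (C := C) (c := c)
    (A := fun u => ∑ k ∈ Finset.Icc 1 ⌊exp u⌋₊, f k) (F := fun s => (F s - c) / s)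
    ?_ ?_ ?_ ?_ ?_
  · refine (hexp.comp tendsto_log_atTop).congr' ?_
    filter_upwards [eventually_gt_atTop 0] with x hx
    simp only [Function.comp_apply]
    rw [exp_neg, exp_log hx, div_eq_mul_inv]
  · intro u v huv
    exact Finset.sum_le_sum_of_subset_of_nonneg
      (Finset.Icc_subset_Icc_right (Nat.floor_mono (exp_le_exp.mpr huv))) fun k _ _ => hf0 k
  · intro u hu
    rw [Nat.floor_eq_zero.mpr (exp_lt_one_iff.mpr hu)]
    rfl
  · intro u
    exact (hf _).trans (mul_le_mul_of_nonneg_left (Nat.floor_le (exp_pos u).le) hC)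
  · refine (hF.sub continuousOn_const).div continuousOn_id fun s hs h0 => ?_
    norm_num [show s = 0 from h0] at hs
  · intro s hs
    have hs0 : s ≠ 0 := fun h => by norm_num [h] at hs
    have hs1 : s - 1 ≠ 0 := sub_ne_zero.mpr fun h => by norm_num [h] at hs
    rw [← mul_right_inj' hs0, ← LSeries_eq_mul_integral_exp hf0 hf hs, hL s hs]
    field_simp
    ring

end DirichletSeries

section PrimeNumberTheorem

open ArithmeticFunction in
theorem tendsto_psi_div_self : Tendsto (fun x => Chebyshev.psi x / x) atTop (𝓝 1) := by
  have hpsi (x : ℝ) : Chebyshev.psi x = ∑ k ∈ Finset.Icc 1 ⌊x⌋₊, vonMangoldt k := by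
    rw [Chebyshev.psi, ← Finset.Icc_add_one_left_eq_Ioc, zero_add]
  simp only [hpsi]
  refine tendsto_sum_div_of_LSeries_eq (C := Real.log 4 + 4)
    (F := vonMangoldt.LFunctionResidueClassAux (1 : ZMod 1)) (fun _ => vonMangoldt_nonneg)
    (fun n => ?_) (vonMangoldt.continuousOn_LFunctionResidueClassAux 1) fun s hs => ?_
  · simpa [hpsi] using Chebyshev.psi_le_const_mul_self (x := n) n.cast_nonneg
  · have hclass : vonMangoldt.residueClass (1 : ZMod 1) = fun n => vonMangoldt n := by
      funext n
      rw [vonMangoldt.residueClass, Set.indicator_of_mem]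
      exact Subsingleton.elim (α := ZMod 1) _ _
    have haux := vonMangoldt.eqOn_LFunctionResidueClassAux (q := 1) (a := 1) isUnit_one hs
    simp only [hclass, Nat.totient_one, Nat.cast_one, inv_one] at haux
    rw [haux, Complex.ofReal_one, add_sub_cancel]

theorem tendsto_theta_div_self : Tendsto (fun x => Chebyshev.theta x / x) atTop (𝓝 1) := by
  have hsqrt : Real.sqrt =o[atTop] fun x : ℝ => x := by
    refine (Asymptotics.isLittleO_iff_tendsto' ?_).mpr ?_
    · filter_upwards [eventually_gt_atTop 0] with x hx h0 using absurd h0 hx.ne'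
    · simpa only [sqrt_div_self] using! tendsto_sqrt_atTop.inv_tendsto_atTop
  have hdiff := (Chebyshev.isBigO_psi_sub_theta_sqrt.trans_isLittleO hsqrt).tendsto_div_nhds_zero
  have hsub := tendsto_psi_div_self.sub hdiff
  rw [sub_zero] at hsub
  refine hsub.congr fun x => ?_
  simp only [Pi.sub_apply]
  ring

end PrimeNumberTheorem

section PrimeCounting

lemma primesBetween_eq_filter_Ioc {w t : ℝ} (hw : 0 ≤ w) (hwt : w ≤ t) :
    primesBetween w t = (Finset.Ioc ⌊w⌋₊ ⌊t⌋₊).filter Nat.Prime := by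
  ext p
  simp only [primesBetween, Finset.mem_filter, Finset.mem_range, Finset.mem_Ioc,
    Nat.floor_lt hw, Nat.lt_succ_iff, Nat.le_floor_iff (hw.trans hwt)]
  tauto

lemma card_primesBetween {w t : ℝ} (hw : 0 ≤ w) (hwt : w ≤ t) :
    ((primesBetween w t).card : ℝ) = Nat.primeCounting ⌊t⌋₊ - Nat.primeCounting ⌊w⌋₊ := by
  have hsub : Nat.primesLE ⌊w⌋₊ ⊆ Nat.primesLE ⌊t⌋₊ := Nat.primesLE_mono (Nat.floor_mono hwt)
  have hdiff : primesBetween w t = Nat.primesLE ⌊t⌋₊ \ Nat.primesLE ⌊w⌋₊ := by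
    ext p
    simp only [primesBetween_eq_filter_Ioc hw hwt, Finset.mem_filter, Finset.mem_Ioc,
      Finset.mem_sdiff, Nat.mem_primesLE]
    grind
  rw [hdiff, Finset.cast_card_sdiff hsub, Nat.primesLE_card_eq_primeCounting,
    Nat.primesLE_card_eq_primeCounting]

theorem tendsto_primeCounting_mul_log_div :
    Tendsto (fun x : ℝ => (Nat.primeCounting ⌊x⌋₊ : ℝ) * log x / x) atTop (𝓝 1) := by
  have herr : (fun x : ℝ => x / log x ^ 2) =o[atTop] fun x => x / log x := by
    refine (Asymptotics.isLittleO_iff_tendsto' ?_).mpr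
      (tendsto_log_atTop.inv_tendsto_atTop.congr' ?_)
    all_goals filter_upwards [eventually_gt_atTop 1] with x hx
    all_goals have hlog : log x ≠ 0 := (log_pos hx).ne'
    all_goals have hx0 : x ≠ 0 := by linarith
    · exact fun h => absurd h (div_ne_zero hx0 hlog)
    · simp only [Pi.inv_apply]
      field_simp
  have hlim := tendsto_theta_div_self.add
    (Chebyshev.primeCounting_sub_theta_div_log_isBigO.trans_isLittleO herr).tendsto_div_nhds_zero
  rw [add_zero] at hlim
  refine hlim.congr' ?_
  filter_upwards [eventually_gt_atTop 1] with x hx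
  have hlog : log x ≠ 0 := (log_pos hx).ne'
  have hx0 : x ≠ 0 := by linarith
  field_simp
  ring

theorem tendsto_card_primesBetween_div_mul_log_div {ξ : ℝ} (hξ : 1 < ξ) :
    Tendsto (fun x => ((primesBetween (x / ξ) x).card : ℝ) * log x / x) atTop
      (𝓝 (1 - 1 / ξ)) := by
  have hξ0 : 0 < ξ := by linarith
  have hdiv : Tendsto (fun x => x / ξ) atTop atTop := tendsto_id.atTop_div_const hξ0
  have hlog : Tendsto (fun x => log (x / ξ) / log x) atTop (𝓝 1) := by
    have hlim := (tendsto_log_atTop.const_div_atTop (log ξ)).const_sub 1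
    rw [sub_zero] at hlim
    refine hlim.congr' ?_
    filter_upwards [eventually_gt_atTop 1] with x hx
    rw [log_div (by linarith) hξ0.ne', sub_div, div_self (log_pos hx).ne']
  have hlim := tendsto_primeCounting_mul_log_div.sub
    (((tendsto_primeCounting_mul_log_div.comp hdiv).div hlog one_ne_zero).div_const ξ)
  rw [div_one] at hlim
  refine hlim.congr' ?_
  filter_upwards [eventually_gt_atTop ξ] with x hx
  have hx0 : 0 < x := hξ0.trans hx
  have hlogx : log (x / ξ) ≠ 0 := (log_pos ((one_lt_div hξ0).mpr hx)).ne'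
  rw [card_primesBetween (div_nonneg hx0.le hξ0.le) (div_le_self hx0.le hξ.le)]
  simp only [Function.comp_apply, Pi.div_apply]
  field_simp

end PrimeCounting

section Mertens

lemma log_factorial_eq_sum_primesLE (n : ℕ) :
    log (n.factorial : ℝ) = ∑ p ∈ n.primesLE, (n.factorial.factorization p : ℝ) * log p := by
  rw [log_nat_eq_sum_factorization]
  refine Finsupp.sum_of_support_subset _ (fun p hp => ?_) _ (by simp)
  rw [Nat.support_factorization, Nat.mem_primeFactors] at hp
  exact Nat.mem_primesLE.mpr ⟨hp.1.dvd_factorial.mp hp.2.1, hp.1⟩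

lemma div_sub_one_le_factorization_factorial {p : ℕ} (hp : p.Prime) (n : ℕ) :
    (n : ℝ) / p - 1 ≤ n.factorial.factorization p := by
  have hle : n / p ≤ n.factorial.factorization p := by
    rw [Nat.factorization_factorial hp (b := Nat.log p n + 2) (by lia)]
    simpa using Finset.single_le_sum (f := fun i => n / p ^ i) (fun i _ => Nat.zero_le _)
      (show 1 ∈ Finset.Ico 1 (Nat.log p n + 2) by simp)
  have hfloor := Nat.lt_floor_add_one ((n : ℝ) / p)
  rw [Nat.floor_div_eq_div] at hfloor
  have hcast : ((n / p : ℕ) : ℝ) ≤ n.factorial.factorization p := by exact_mod_cast hle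
  linarith

lemma factorization_factorial_le_div {p : ℕ} (hp : p.Prime) (n : ℕ) :
    (n.factorial.factorization p : ℝ) ≤ n / ((p : ℝ) - 1) := by
  have hle : (p - 1) * n.factorial.factorization p ≤ n :=
    (Nat.sub_one_mul_factorization_factorial hp).trans_le (Nat.sub_le _ _)
  have hp1 : (1 : ℝ) < p := by exact_mod_cast hp.one_lt
  rw [le_div_iff₀ (by linarith), mul_comm, ← Nat.cast_one, ← Nat.cast_sub hp.one_lt.le]
  exact_mod_cast hle

lemma log_mul_one_div_sub_one_div_le {x : ℝ} (hx : 2 ≤ x) :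
    log x * (1 / (x - 1) - 1 / x) ≤ 4 * (x ^ (3 / 2 : ℝ))⁻¹ := by
  have hx0 : 0 < x := by linarith
  have hfrac : 1 / (x - 1) - 1 / x ≤ 2 / x ^ 2 := by
    rw [div_sub_div _ _ (by linarith) hx0.ne', div_le_div_iff₀ (by nlinarith) (by positivity)]
    nlinarith
  have hpow : x ^ (3 / 2 : ℝ) * x ^ (1 / 2 : ℝ) = x ^ 2 := by
    rw [← rpow_add hx0, ← rpow_natCast]
    norm_num
  calc log x * (1 / (x - 1) - 1 / x)
      ≤ log x * (2 / x ^ 2) := by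
        gcongr
        exact log_nonneg (by linarith)
    _ ≤ x ^ (1 / 2 : ℝ) / (1 / 2) * (2 / x ^ 2) := by
        gcongr
        exact log_le_rpow_div hx0.le (by norm_num)
    _ = 4 * (x ^ (3 / 2 : ℝ))⁻¹ := by
        rw [← hpow]
        field_simp
        norm_num

lemma exists_sum_primesLE_log_mul_le :
    ∃ C : ℝ, ∀ n : ℕ, ∑ p ∈ n.primesLE, log p * (1 / ((p : ℝ) - 1) - 1 / p) ≤ C := by
  have hsum : Summable fun n : ℕ => 4 * ((n : ℝ) ^ (3 / 2 : ℝ))⁻¹ :=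
    (Real.summable_nat_rpow_inv.mpr (by norm_num)).mul_left 4
  refine ⟨∑' n : ℕ, 4 * ((n : ℝ) ^ (3 / 2 : ℝ))⁻¹, fun n => ?_⟩
  refine (Finset.sum_le_sum fun p hp => log_mul_one_div_sub_one_div_le ?_).trans
    (hsum.sum_le_tsum _ fun n _ => by positivity)
  exact_mod_cast Nat.two_le_of_mem_primesLE hp

lemma mul_sum_log_div_le_log_factorial (n : ℕ) :
    n * ∑ p ∈ n.primesLE, log p / p - Chebyshev.theta n ≤ log (n.factorial : ℝ) := by
  rw [log_factorial_eq_sum_primesLE, Chebyshev.theta_eq_sum_primesLE_log,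
    Finset.mul_sum, ← Finset.sum_sub_distrib]
  refine Finset.sum_le_sum fun p hp => ?_
  calc n * (log p / p) - log p = ((n : ℝ) / p - 1) * log p := by ring
    _ ≤ n.factorial.factorization p * log p := by
        gcongr
        exact div_sub_one_le_factorization_factorial (Nat.prime_of_mem_primesLE hp) n

lemma log_factorial_le_mul_sum_log_div_sub_one (n : ℕ) :
    log (n.factorial : ℝ) ≤ n * ∑ p ∈ n.primesLE, log p / ((p : ℝ) - 1) := by
  rw [log_factorial_eq_sum_primesLE, Finset.mul_sum]
  refine Finset.sum_le_sum fun p hp => ?_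
  calc n.factorial.factorization p * log p ≤ n / ((p : ℝ) - 1) * log p := by
        gcongr
        exact factorization_factorial_le_div (Nat.prime_of_mem_primesLE hp) n
    _ = n * (log p / ((p : ℝ) - 1)) := by ring

lemma log_factorial_le_mul_log (n : ℕ) : log (n.factorial : ℝ) ≤ n * log n := by
  rw [← log_pow]
  exact log_le_log (by positivity) (by exact_mod_cast Nat.factorial_le_pow n)

lemma mul_log_sub_le_log_factorial (n : ℕ) : n * log n - n ≤ log (n.factorial : ℝ) := by
  rcases n.eq_zero_or_pos with rfl | hn
  · simp
  have hexp := log_le_log (by positivity) (pow_div_factorial_le_exp (n : ℝ) n.cast_nonneg n)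
  rw [log_div (by positivity) (by positivity), log_pow, log_exp] at hexp
  linarith

lemma exists_abs_sum_primesLE_sub_log_le :
    ∃ C : ℝ, ∀ n : ℕ, 1 ≤ n → |∑ p ∈ n.primesLE, log p / p - log n| ≤ C := by
  obtain ⟨B, hB⟩ := exists_sum_primesLE_log_mul_le
  have hB0 : 0 ≤ B := by simpa using hB 0
  refine ⟨B + 1 + log 4, fun n hn => ?_⟩
  have hn0 : (0 : ℝ) < n := by exact_mod_cast hn
  have hlog4 : 0 ≤ log 4 := log_nonneg (by norm_num)
  have hupper : ∑ p ∈ n.primesLE, log p / p ≤ log n + log 4 := by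
    refine le_of_mul_le_mul_left ?_ hn0
    linarith [mul_sum_log_div_le_log_factorial n, log_factorial_le_mul_log n,
      Chebyshev.theta_le_log4_mul_x (x := n) hn0.le]
  have hlower : log n - 1 ≤ ∑ p ∈ n.primesLE, log p / ((p : ℝ) - 1) := by
    refine le_of_mul_le_mul_left ?_ hn0
    linarith [log_factorial_le_mul_sum_log_div_sub_one n, mul_log_sub_le_log_factorial n]
  have hdiff : ∑ p ∈ n.primesLE, log p / ((p : ℝ) - 1) - ∑ p ∈ n.primesLE, log p / p ≤ B := by
    rw [← Finset.sum_sub_distrib]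
    exact (Finset.sum_congr rfl fun p _ => by ring).trans_le (hB n)
  rw [abs_le]
  constructor <;> linarith

theorem exists_abs_sum_primes_log_div_sub_log_le :
    ∃ C : ℝ, ∀ x : ℝ, 1 ≤ x →
      |∑ k ∈ Finset.Icc 0 ⌊x⌋₊, (if k.Prime then log k / k else 0) - log x| ≤ C := by
  obtain ⟨B, hB⟩ := exists_abs_sum_primesLE_sub_log_le
  refine ⟨B + log 2, fun x hx => ?_⟩
  have hfloor : 1 ≤ ⌊x⌋₊ := Nat.floor_pos.mpr hx
  have hfloor0 : (1 : ℝ) ≤ ⌊x⌋₊ := by exact_mod_cast hfloor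
  have hlower : log ⌊x⌋₊ ≤ log x := log_le_log (by linarith) (Nat.floor_le (by linarith))
  have hupper : log x ≤ log 2 + log ⌊x⌋₊ := by
    rw [← log_mul (by norm_num) (by linarith)]
    exact log_le_log (by linarith) (by linarith [Nat.lt_floor_add_one x])
  have habs := abs_le.mp (hB ⌊x⌋₊ hfloor)
  rw [← Finset.sum_filter, ← Nat.primesLE_eq_filter_Icc_zero, abs_le]
  constructor <;> linarith [habs.1, habs.2, log_nonneg (show (1 : ℝ) ≤ 2 by norm_num)]

end Mertens

section AbelSummation

variable {w t : ℝ}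

lemma hasDerivAt_inv_log_of_one_lt {u : ℝ} (hu : 1 < u) :
    HasDerivAt (fun u => (log u)⁻¹) (-(u * log u ^ 2)⁻¹) u := by
  refine (hasDerivAt_inv_log (by linarith) hu.ne' (by linarith)).congr_deriv ?_
  rw [neg_div, div_eq_mul_inv, mul_inv]

lemma continuousOn_inv_mul_log_sq (hw : 1 < w) :
    ContinuousOn (fun u => (u * log u ^ 2)⁻¹) (Set.Icc w t) := by
  have hpos (u : ℝ) (hu : u ∈ Set.Icc w t) : 1 < u := hw.trans_le hu.1
  refine ContinuousOn.inv₀ (continuousOn_id.mul ((continuousOn_log.mono ?_).pow 2)) ?_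
  · exact fun u hu => (zero_lt_one.trans (hpos u hu)).ne'
  · exact fun u hu =>
      mul_ne_zero (by linarith [hpos u hu]) (pow_ne_zero 2 (log_pos (hpos u hu)).ne')

lemma integral_inv_mul_log_sq (hw : 1 < w) (hwt : w ≤ t) :
    ∫ u in Set.Ioc w t, (u * log u ^ 2)⁻¹ = (log w)⁻¹ - (log t)⁻¹ := by
  rw [← intervalIntegral.integral_of_le hwt]
  refine (intervalIntegral.integral_eq_sub_of_hasDerivAt (f := fun u => -(log u)⁻¹)
    (fun u hu => ?_) ?_).trans (by ring)
  · rw [Set.uIcc_of_le hwt] at hu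
    simpa using! (hasDerivAt_inv_log_of_one_lt (hw.trans_le hu.1)).neg
  · exact (continuousOn_inv_mul_log_sq hw).intervalIntegrable_of_Icc hwt

lemma integral_inv_mul_log_sq_mul_log (hw : 1 < w) (hwt : w ≤ t) :
    ∫ u in Set.Ioc w t, (u * log u ^ 2)⁻¹ * log u = log (log t) - log (log w) := by
  rw [← intervalIntegral.integral_of_le hwt]
  refine intervalIntegral.integral_eq_sub_of_hasDerivAt (f := fun u => log (log u))
    (fun u hu => ?_) ?_
  · rw [Set.uIcc_of_le hwt] at hu
    have hu1 : 1 < u := hw.trans_le hu.1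
    have hlog : log u ≠ 0 := (log_pos hu1).ne'
    refine (hasDerivAt_log_log (by linarith) hu1.ne' (by linarith)).congr_deriv ?_
    field_simp
  · refine ContinuousOn.intervalIntegrable_of_Icc hwt
      ((continuousOn_inv_mul_log_sq hw).mul (continuousOn_log.mono fun u hu => ?_))
    exact (zero_lt_one.trans (hw.trans_le hu.1)).ne'

variable {c : ℕ → ℝ} {C : ℝ}

lemma sum_div_log_eq (hw : 1 < w) (hwt : w ≤ t) :
    ∑ k ∈ Finset.Ioc ⌊w⌋₊ ⌊t⌋₊, c k / log k =
      (∑ k ∈ Finset.Icc 0 ⌊t⌋₊, c k) / log t - (∑ k ∈ Finset.Icc 0 ⌊w⌋₊, c k) / log w +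
        ∫ u in Set.Ioc w t, (u * log u ^ 2)⁻¹ * ∑ k ∈ Finset.Icc 0 ⌊u⌋₊, c k := by
  have hderiv (u : ℝ) (hu : u ∈ Set.Icc w t) := hasDerivAt_inv_log_of_one_lt (hw.trans_le hu.1)
  have habel := sum_mul_eq_sub_sub_integral_mul c (f := fun u => (log u)⁻¹) (by linarith) hwt
    (fun u hu => (hderiv u hu).differentiableAt)
    ((continuousOn_inv_mul_log_sq hw).neg.integrableOn_Icc.congr_fun
      (fun u hu => (hderiv u hu).deriv.symm) measurableSet_Icc)
  rw [setIntegral_congr_fun measurableSet_Ioc fun u hu => by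
    rw [(hderiv u (Set.Ioc_subset_Icc_self hu)).deriv, neg_mul], integral_neg, sub_neg_eq_add]
    at habel
  simpa only [div_eq_inv_mul] using habel

lemma sum_div_log_sub_eq (hw : 1 < w) (hwt : w ≤ t) :
    ∑ k ∈ Finset.Ioc ⌊w⌋₊ ⌊t⌋₊, c k / log k - (log (log t) - log (log w)) =
      (∑ k ∈ Finset.Icc 0 ⌊t⌋₊, c k - log t) / log t -
        (∑ k ∈ Finset.Icc 0 ⌊w⌋₊, c k - log w) / log w +
        ∫ u in Set.Ioc w t, (u * log u ^ 2)⁻¹ * (∑ k ∈ Finset.Icc 0 ⌊u⌋₊, c k - log u) := by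
  have hweight := (continuousOn_inv_mul_log_sq (t := t) hw).integrableOn_Icc (μ := volume)
  have hsum : IntegrableOn (fun u => (u * log u ^ 2)⁻¹ * ∑ k ∈ Finset.Icc 0 ⌊u⌋₊, c k)
      (Set.Ioc w t) :=
    (integrableOn_mul_sum_Icc c (by linarith) hweight).mono_set Set.Ioc_subset_Icc_self
  have hlog : IntegrableOn (fun u => (u * log u ^ 2)⁻¹ * log u) (Set.Ioc w t) := by
    refine (ContinuousOn.integrableOn_Icc ((continuousOn_inv_mul_log_sq hw).mul
      (continuousOn_log.mono fun u hu => ?_))).mono_set Set.Ioc_subset_Icc_self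
    exact (zero_lt_one.trans (hw.trans_le hu.1)).ne'
  have hlogw : log w ≠ 0 := (log_pos hw).ne'
  have hlogt : log t ≠ 0 := (log_pos (hw.trans_le hwt)).ne'
  simp only [mul_sub]
  rw [sum_div_log_eq hw hwt, integral_sub hsum hlog, integral_inv_mul_log_sq_mul_log hw hwt,
    sub_div, sub_div, div_self hlogw, div_self hlogt]
  ring

theorem abs_sum_div_log_sub_le (hC : ∀ u : ℝ, 1 ≤ u → |∑ k ∈ Finset.Icc 0 ⌊u⌋₊, c k - log u| ≤ C)
    (hw : 1 < w) (hwt : w ≤ t) :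
    |∑ k ∈ Finset.Ioc ⌊w⌋₊ ⌊t⌋₊, c k / log k - (log (log t) - log (log w))| ≤ 2 * C / log w := by
  have hintegral : |∫ u in Set.Ioc w t,
      (u * log u ^ 2)⁻¹ * (∑ k ∈ Finset.Icc 0 ⌊u⌋₊, c k - log u)| ≤ C / log w - C / log t := by
    rw [div_eq_mul_inv, div_eq_mul_inv, ← mul_sub, ← integral_inv_mul_log_sq hw hwt,
      ← integral_const_mul, ← norm_eq_abs]
    refine norm_integral_le_of_norm_le
      ((((continuousOn_inv_mul_log_sq hw).integrableOn_Icc (μ := volume)).mono_set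
        Set.Ioc_subset_Icc_self).const_mul C) ?_
    filter_upwards [ae_restrict_mem measurableSet_Ioc] with u hu
    have hu1 : 1 < u := hw.trans hu.1
    rw [norm_mul, mul_comm C, norm_of_nonneg (by positivity)]
    gcongr
    exact hC u hu1.le
  have hendpoint {v : ℝ} (hv : 1 < v) :
      |(∑ k ∈ Finset.Icc 0 ⌊v⌋₊, c k - log v) / log v| ≤ C / log v := by
    rw [abs_div, abs_of_pos (log_pos hv)]
    gcongr
    · exact (log_pos hv).le
    · exact hC v hv.le
  rw [sum_div_log_sub_eq hw hwt]
  have hw' := abs_le.mp (hendpoint hw)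
  have ht' := abs_le.mp (hendpoint (hw.trans_le hwt))
  have hi' := abs_le.mp hintegral
  rw [mul_div_assoc, abs_le]
  constructor <;> linarith

end AbelSummation

section MertensProduct

theorem exists_abs_sum_inv_primesBetween_sub_le :
    ∃ C : ℝ, ∀ w t : ℝ, 1 < w → w ≤ t →
      |∑ p ∈ primesBetween w t, 1 / (p : ℝ) - (log (log t) - log (log w))| ≤ C / log w := by
  obtain ⟨C, hC⟩ := exists_abs_sum_primes_log_div_sub_log_le
  refine ⟨2 * C, fun w t hw hwt => ?_⟩
  convert abs_sum_div_log_sub_le hC hw hwt using 3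
  rw [primesBetween_eq_filter_Ioc (by linarith) hwt, Finset.sum_filter]
  refine Finset.sum_congr rfl fun k _ => ?_
  split_ifs with hk
  · have hlog : log k ≠ 0 := (log_pos (by exact_mod_cast hk.one_lt)).ne'
    field_simp
  · rw [zero_div]

variable {w t : ℝ}

lemma lt_of_mem_primesBetween {p : ℕ} (hp : p ∈ primesBetween w t) : w < p :=
  (Finset.mem_filter.mp hp).2.2.1

lemma sum_inv_sub_one_sub_inv_primesBetween_le (hw : 2 ≤ w) (hwt : w ≤ t) :
    ∑ p ∈ primesBetween w t, (1 / ((p : ℝ) - 1) - 1 / p) ≤ (w - 1)⁻¹ := by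
  have hmono : ⌊w⌋₊ + 1 ≤ ⌊t⌋₊ + 1 := Nat.succ_le_succ (Nat.floor_le_floor hwt)
  have hfloor : w - 1 < ⌊w⌋₊ := by linarith [Nat.lt_floor_add_one w]
  have hsub : primesBetween w t ⊆ Finset.Ico (⌊w⌋₊ + 1) (⌊t⌋₊ + 1) := by
    rw [primesBetween_eq_filter_Ioc (by linarith) hwt]
    intro p hp
    grind
  calc ∑ p ∈ primesBetween w t, (1 / ((p : ℝ) - 1) - 1 / p)
      ≤ ∑ n ∈ Finset.Ico (⌊w⌋₊ + 1) (⌊t⌋₊ + 1), (1 / ((n : ℝ) - 1) - 1 / n) := by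
        refine Finset.sum_le_sum_of_subset_of_nonneg hsub fun n hn _ => ?_
        have hn1 : (⌊w⌋₊ : ℝ) + 1 ≤ n := by exact_mod_cast (Finset.mem_Ico.mp hn).1
        rw [sub_nonneg]
        exact one_div_le_one_div_of_le (by linarith) (by linarith)
    _ = 1 / (⌊w⌋₊ : ℝ) - 1 / (⌊t⌋₊ : ℝ) := by
        have htel := Finset.sum_Ico_sub (fun n : ℕ => -(1 / ((n : ℝ) - 1))) hmono
        simp only [Nat.cast_add, Nat.cast_one, add_sub_cancel_right, neg_sub_neg] at htel
        exact htel
    _ ≤ 1 / (⌊w⌋₊ : ℝ) := sub_le_self _ (by positivity)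
    _ ≤ (w - 1)⁻¹ := by
        rw [one_div]
        exact inv_anti₀ (by linarith) hfloor.le

lemma one_sub_one_div_pos {x : ℝ} (hx : 1 < x) : 0 < 1 - 1 / x := by
  rw [sub_pos, div_lt_one (by linarith)]
  exact hx

lemma one_div_le_neg_log_one_sub {x : ℝ} (hx : 1 < x) : 1 / x ≤ -log (1 - 1 / x) := by
  linarith [log_le_sub_one_of_pos (one_sub_one_div_pos hx)]

lemma neg_log_one_sub_le {x : ℝ} (hx : 1 < x) : -log (1 - 1 / x) ≤ 1 / (x - 1) := by
  have hlog := log_le_sub_one_of_pos (inv_pos.mpr (one_sub_one_div_pos hx))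
  rw [log_inv] at hlog
  have hx0 : x ≠ 0 := by linarith
  have hx1 : x - 1 ≠ 0 := by linarith
  refine hlog.trans_eq ?_
  field_simp
  ring

lemma sigBetween_pos (hw : 1 ≤ w) : 0 < sigBetween w t :=
  Finset.prod_pos fun _ hp => one_sub_one_div_pos (hw.trans_lt (lt_of_mem_primesBetween hp))

theorem exists_abs_log_sigBetween_add_le :
    ∃ C : ℝ, ∀ w t : ℝ, 2 ≤ w → w ≤ t →
      |log (sigBetween w t) + (log (log t) - log (log w))| ≤ C / log w + (w - 1)⁻¹ := by
  obtain ⟨C, hC⟩ := exists_abs_sum_inv_primesBetween_sub_le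
  refine ⟨C, fun w t hw hwt => ?_⟩
  have hone (p : ℕ) (hp : p ∈ primesBetween w t) : 1 < (p : ℝ) := by
    linarith [lt_of_mem_primesBetween hp]
  have hlog : -log (sigBetween w t) = ∑ p ∈ primesBetween w t, -log (1 - 1 / (p : ℝ)) := by
    rw [sigBetween, log_prod fun p hp => (one_sub_one_div_pos (hone p hp)).ne',
      Finset.sum_neg_distrib]
  have hlower := Finset.sum_le_sum fun p hp => one_div_le_neg_log_one_sub (hone p hp)
  have hupper := Finset.sum_le_sum fun p hp => neg_log_one_sub_le (hone p hp)
  have htail := sum_inv_sub_one_sub_inv_primesBetween_le hw hwt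
  rw [Finset.sum_sub_distrib] at htail
  rw [← hlog] at hlower hupper
  have hpos : 0 < (w - 1)⁻¹ := inv_pos.mpr (by linarith)
  have habs := abs_le.mp (hC w t (by linarith) hwt)
  rw [abs_le]
  constructor <;> linarith [habs.1, habs.2]

theorem tendsto_inv_sigBetween_mul_log_div_log {ι : Type*} {l : Filter ι} {w t : ι → ℝ}
    (hw : Tendsto w l atTop) (hwt : ∀ᶠ i in l, w i ≤ t i) :
    Tendsto (fun i => (sigBetween (w i) (t i))⁻¹ * (log (w i) / log (t i))) l (𝓝 1) := by
  obtain ⟨C, hC⟩ := exists_abs_log_sigBetween_add_le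
  have herr : Tendsto (fun i => C / log (w i) + (w i - 1)⁻¹) l (𝓝 0) := by
    simpa only [add_zero] using! ((tendsto_log_atTop.comp hw).const_div_atTop C).add
      ((tendsto_atTop_add_const_right l (-1) hw).inv_tendsto_atTop)
  have hlog : Tendsto (fun i => log (sigBetween (w i) (t i)) +
      (log (log (t i)) - log (log (w i)))) l (𝓝 0) := by
    refine squeeze_zero_norm' ?_ herr
    filter_upwards [hw.eventually_ge_atTop 2, hwt] with i hwi hi using hC _ _ hwi hi
  have hexp := (continuous_exp.tendsto _).comp hlog.neg
  rw [neg_zero, exp_zero] at hexp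
  refine hexp.congr' ?_
  filter_upwards [hw.eventually_gt_atTop 1, hwt] with i hwi hi
  have hlogw := log_pos hwi
  have hlogt := log_pos (hwi.trans_le hi)
  rw [Function.comp_apply, neg_add, neg_sub, exp_add, exp_neg, exp_log (sigBetween_pos hwi.le),
    exp_sub, exp_log hlogw, exp_log hlogt]

end MertensProduct

section IntervalParameters

lemma tendsto_log_log_atTop : Tendsto (fun x => log (log x)) atTop atTop :=
  tendsto_log_atTop.comp tendsto_log_atTop

lemma tendsto_log_log_div_log : Tendsto (fun x => log (log x) / log x) atTop (𝓝 0) :=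
  isLittleO_log_id_atTop.tendsto_div_nhds_zero.comp tendsto_log_atTop

section

variable {ι : Type*} {l : Filter ι} {f g : ι → ℝ} {c : ℝ}

lemma tendsto_atTop_of_tendsto_div (hc : 0 < c) (hg : Tendsto g l atTop)
    (hf : Tendsto (fun i => f i / g i) l (𝓝 c)) : Tendsto f l atTop := by
  refine (hf.pos_mul_atTop hc hg).congr' ?_
  filter_upwards [hg.eventually_ne_atTop 0] with i hi using div_mul_cancel₀ _ hi

lemma tendsto_atTop_of_tendsto_log_div (hc : 0 < c) (hg : Tendsto g l atTop)
    (hf : Tendsto (fun i => log (f i) / g i) l (𝓝 c)) (hf0 : ∀ᶠ i in l, 0 < f i) :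
    Tendsto f l atTop := by
  refine (tendsto_exp_atTop.comp (tendsto_atTop_of_tendsto_div hc hg hf)).congr' ?_
  filter_upwards [hf0] with i hi using exp_log hi

end

variable {δ : ℝ}

lemma tendsto_mul_log_rpow_atTop (hδ : 0 < δ) :
    Tendsto (fun x => x * log x ^ δ) atTop atTop :=
  tendsto_id.atTop_mul_atTop₀ ((tendsto_rpow_atTop hδ).comp tendsto_log_atTop)

lemma tendsto_yy_atTop (hδ : 0 < δ) : Tendsto (fun x => (yy δ x : ℝ)) atTop atTop :=
  tendsto_atTop_mono (fun _ => Nat.le_ceil _) (tendsto_mul_log_rpow_atTop hδ)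

lemma tendsto_log_yy_sub (hδ : 0 < δ) :
    Tendsto (fun x => log (yy δ x) - (log x + δ * log (log x))) atTop (𝓝 0) := by
  have hratio := (tendsto_nat_ceil_div_atTop (R := ℝ)).comp (tendsto_mul_log_rpow_atTop hδ)
  have hlog := (continuousAt_log one_ne_zero).tendsto.comp hratio
  rw [log_one] at hlog
  refine hlog.congr' ?_
  filter_upwards [eventually_gt_atTop 1, (tendsto_yy_atTop hδ).eventually_gt_atTop 0]
    with x hx hy
  have hx0 : 0 < x := by linarith
  have hpow : 0 < log x ^ δ := rpow_pos_of_pos (log_pos hx) δ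
  simp only [Function.comp_apply]
  rw [← yy, log_div hy.ne' (by positivity), log_mul hx0.ne' hpow.ne', log_rpow (log_pos hx)]

lemma tendsto_log_yy_div_log (hδ : 0 < δ) :
    Tendsto (fun x => log (yy δ x) / log x) atTop (𝓝 1) := by
  have hlim := (((tendsto_log_yy_sub hδ).div_atTop tendsto_log_atTop).add_const 1).add
    (tendsto_log_log_div_log.const_mul δ)
  rw [zero_add, mul_zero, add_zero] at hlim
  refine hlim.congr' ?_
  filter_upwards [eventually_gt_atTop 1] with x hx
  have hlog : log x ≠ 0 := (log_pos hx).ne'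
  field_simp
  ring

lemma tendsto_log_two_mul_yy_div (hδ : 0 < δ) :
    Tendsto (fun x => log (2 * yy δ x / x) / log (log x)) atTop (𝓝 δ) := by
  have hlim := (((tendsto_log_yy_sub hδ).const_add (log 2)).div_atTop
    tendsto_log_log_atTop).add_const δ
  rw [zero_add] at hlim
  refine hlim.congr' ?_
  filter_upwards [eventually_gt_atTop 1, (tendsto_yy_atTop hδ).eventually_gt_atTop 0,
    tendsto_log_log_atTop.eventually_gt_atTop 0] with x hx hy hloglog
  rw [log_div (by positivity) (by linarith), log_mul two_ne_zero hy.ne']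
  field_simp
  ring

lemma eventually_zz_pos (hδ : 0 < δ) : ∀ᶠ x in atTop, 0 < zz δ x := by
  filter_upwards [eventually_gt_atTop 1, (tendsto_yy_atTop hδ).eventually_gt_atTop 0,
    tendsto_log_log_atTop.eventually_gt_atTop 0] with x hx hy hloglog
  exact div_pos (by positivity) (rpow_pos_of_pos (log_pos hx) _)

lemma eventually_log_zz_eq (hδ : 0 < δ) : ∀ᶠ x in atTop,
    log (zz δ x) = log (yy δ x) + 2 * log (log (log x)) - log (log x) / 2 := by
  filter_upwards [eventually_gt_atTop 1, (tendsto_yy_atTop hδ).eventually_gt_atTop 0,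
    tendsto_log_log_atTop.eventually_gt_atTop 0] with x hx hy hloglog
  rw [zz, log_div (by positivity) (rpow_pos_of_pos (log_pos hx) _).ne',
    log_mul hy.ne' (by positivity), log_pow, log_rpow (log_pos hx)]
  push_cast
  ring

lemma tendsto_log_zz_div_log (hδ : 0 < δ) :
    Tendsto (fun x => log (zz δ x) / log x) atTop (𝓝 1) := by
  have hlll : Tendsto (fun x => log (log (log x)) / log x) atTop (𝓝 0) := by
    have hlim := (tendsto_log_log_div_log.comp tendsto_log_atTop).mul tendsto_log_log_div_log
    rw [zero_mul] at hlim
    refine hlim.congr' ?_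
    filter_upwards [tendsto_log_log_atTop.eventually_gt_atTop 0] with x hx
    simp only [Function.comp_apply]
    field_simp
  have hlim := ((tendsto_log_yy_div_log hδ).add (hlll.const_mul 2)).sub
    (tendsto_log_log_div_log.div_const 2)
  rw [mul_zero, add_zero, zero_div, sub_zero] at hlim
  refine hlim.congr' ?_
  filter_upwards [eventually_log_zz_eq hδ] with x hx
  rw [hx]
  ring

lemma tendsto_log_yy_div_mul_zz (hδ : 0 < δ) {ξ : ℝ} (hξ : 0 < ξ) :
    Tendsto (fun x => log (yy δ x / (ξ * zz δ x)) / log (log x)) atTop (𝓝 (1 / 2)) := by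
  have hlim := ((tendsto_log_log_atTop.const_div_atTop (log ξ)).const_sub (1 / 2)).sub
    ((tendsto_log_log_div_log.comp tendsto_log_atTop).const_mul 2)
  rw [mul_zero, sub_zero, sub_zero] at hlim
  refine hlim.congr' ?_
  filter_upwards [eventually_log_zz_eq hδ, eventually_zz_pos hδ,
    (tendsto_yy_atTop hδ).eventually_gt_atTop 0,
    tendsto_log_log_atTop.eventually_gt_atTop 0] with x hx hz hy hloglog
  rw [log_div hy.ne' (by positivity), log_mul hξ.ne' hz.ne', hx, Function.comp_apply]
  field_simp
  ring

lemma tendsto_two_mul_yy_div_atTop (hδ : 0 < δ) :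
    Tendsto (fun x => 2 * yy δ x / x) atTop atTop := by
  refine tendsto_atTop_of_tendsto_log_div hδ tendsto_log_log_atTop
    (tendsto_log_two_mul_yy_div hδ) ?_
  filter_upwards [eventually_gt_atTop 0, (tendsto_yy_atTop hδ).eventually_gt_atTop 0]
    with x hx hy
  positivity

lemma tendsto_zz_atTop (hδ : 0 < δ) : Tendsto (zz δ) atTop atTop :=
  tendsto_atTop_of_tendsto_log_div one_pos tendsto_log_atTop (tendsto_log_zz_div_log hδ)
    (eventually_zz_pos hδ)

lemma tendsto_log_zz_div_log_yy (hδ : 0 < δ) :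
    Tendsto (fun x => log (zz δ x) / log (yy δ x)) atTop (𝓝 1) := by
  have hlim := (tendsto_log_zz_div_log hδ).div (tendsto_log_yy_div_log hδ) one_ne_zero
  rw [div_one] at hlim
  refine hlim.congr' ?_
  filter_upwards [eventually_gt_atTop 1] with x hx
  exact div_div_div_cancel_right₀ (log_pos hx).ne' _ _

lemma eventually_yy_div_rpow_le_zz (hδ : 0 < δ) {ξ : ℝ} (hξ : 0 < ξ) (M : ℝ) :
    ∀ᶠ x in atTop, (yy δ x / (ξ * zz δ x)) ^ M ≤ zz δ x := by
  have hzero : Tendsto (fun x => M * (log (yy δ x / (ξ * zz δ x)) / log (log x) *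
      (log (log x) / log x))) atTop (𝓝 0) := by
    simpa only [mul_zero] using
      ((tendsto_log_yy_div_mul_zz hδ hξ).mul tendsto_log_log_div_log).const_mul M
  filter_upwards [hzero.eventually_lt (tendsto_log_zz_div_log hδ) one_pos,
    eventually_gt_atTop 1, eventually_zz_pos hδ, (tendsto_yy_atTop hδ).eventually_gt_atTop 0,
    tendsto_log_log_atTop.eventually_gt_atTop 0] with x hlt hx hz hy hloglog
  have hlog := log_pos hx
  rw [div_mul_div_cancel₀ hloglog.ne', ← mul_div_assoc, div_lt_div_iff_of_pos_right hlog] at hlt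
  have hquot : 0 < yy δ x / (ξ * zz δ x) := by positivity
  rw [← log_le_log_iff (rpow_pos_of_pos hquot M) hz, log_rpow hquot]
  exact hlt.le

end IntervalParameters

section ExponentWindows

variable {A : ℕ → Prop} [DecidablePred A] {d C : ℝ}

lemma exists_tendsto_sum_range_filter_sub_log (hA : ∀ n, |(Nat.count A n : ℝ) - d * n| ≤ C) :
    ∃ c, Tendsto (fun n : ℕ => ∑ j ∈ Finset.range n with A j, 1 / ((j : ℝ) + 1) - d * log n)
      atTop (𝓝 c) := by
  have hbounded (n : ℕ) : ‖∑ j ∈ Finset.range n, ((if A j then 1 else 0) - d)‖ ≤ C := by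
    rw [Finset.sum_sub_distrib, Finset.sum_boole, ← Nat.count_eq_card_filter_range,
      Finset.sum_const, Finset.card_range, nsmul_eq_mul, mul_comm, norm_eq_abs]
    exact hA n
  obtain ⟨c, hc⟩ := cauchySeq_tendsto_of_complete
    (Antitone.cauchySeq_series_mul_of_tendsto_zero_of_bounded
      (fun _ _ => Nat.one_div_le_one_div) tendsto_one_div_add_atTop_nhds_zero_nat hbounded)
  refine ⟨c + d * eulerMascheroniConstant,
    (hc.add (tendsto_harmonic_sub_log.const_mul d)).congr fun n => ?_⟩
  simp only [smul_eq_mul, mul_sub, mul_ite, mul_one, mul_zero, Finset.sum_sub_distrib,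
    Finset.sum_filter, harmonic, ← Finset.sum_mul]
  push_cast
  simp only [one_div]
  ring

variable {ι : Type*} {l : Filter ι}

lemma tendsto_sum_Ico_filter {m n : ι → ℕ} {L : ℝ} (hA : ∀ n, |(Nat.count A n : ℝ) - d * n| ≤ C)
    (hm : Tendsto m l atTop) (hmn : ∀ i, m i ≤ n i)
    (hL : Tendsto (fun i => log (n i) - log (m i)) l (𝓝 L)) :
    Tendsto (fun i => ∑ j ∈ Finset.Ico (m i) (n i) with A j, 1 / ((j : ℝ) + 1)) l
      (𝓝 (d * L)) := by
  obtain ⟨c, hc⟩ := exists_tendsto_sum_range_filter_sub_log hA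
  have hlim := ((hc.comp (tendsto_atTop_mono hmn hm)).sub (hc.comp hm)).add (hL.const_mul d)
  rw [sub_self, zero_add] at hlim
  refine hlim.congr fun i => ?_
  simp only [Function.comp_apply, Finset.sum_filter]
  rw [← Finset.sum_range_add_sum_Ico _ (hmn i)]
  ring

variable {a b g : ι → ℝ} {α β : ℝ}

lemma tendsto_ceil_div (hα : 0 < α) (hg : Tendsto g l atTop)
    (ha : Tendsto (fun i => a i / g i) l (𝓝 α)) :
    Tendsto (fun i => (⌈a i⌉₊ : ℝ) / g i) l (𝓝 α) := by
  have ha_atTop := tendsto_atTop_of_tendsto_div hα hg ha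
  have hlim := (tendsto_nat_ceil_div_atTop.comp ha_atTop).mul ha
  rw [one_mul] at hlim
  refine hlim.congr' ?_
  filter_upwards [ha_atTop.eventually_ne_atTop 0] with i hi using div_mul_div_cancel₀ hi

lemma tendsto_floor_add_one_div (hα : 0 < α) (hg : Tendsto g l atTop)
    (ha : Tendsto (fun i => a i / g i) l (𝓝 α)) :
    Tendsto (fun i => ((⌊a i⌋₊ + 1 : ℕ) : ℝ) / g i) l (𝓝 α) := by
  have ha_atTop := tendsto_atTop_of_tendsto_div hα hg ha
  have hlim := ((tendsto_nat_floor_div_atTop.comp ha_atTop).mul ha).add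
    (hg.const_div_atTop 1)
  rw [one_mul, add_zero] at hlim
  refine hlim.congr' ?_
  filter_upwards [ha_atTop.eventually_ne_atTop 0] with i hi
  rw [Nat.cast_add_one, add_div, Function.comp_apply, div_mul_div_cancel₀ hi]

lemma tendsto_sum_Icc_filter (hA : ∀ n, |(Nat.count A n : ℝ) - d * n| ≤ C) (hα : 0 < α)
    (hβ : 0 < β) (hg : Tendsto g l atTop) (ha : Tendsto (fun i => a i / g i) l (𝓝 α))
    (hb : Tendsto (fun i => b i / g i) l (𝓝 β)) :
    Tendsto (fun i => ∑ j ∈ Finset.Icc ⌈a i⌉₊ ⌊b i⌋₊ with A j, 1 / ((j : ℝ) + 1)) l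
      (𝓝 (d * log⁺ (β / α))) := by
  have hIcc (i : ι) : Finset.Icc ⌈a i⌉₊ ⌊b i⌋₊ =
      Finset.Ico ⌈a i⌉₊ (max ⌈a i⌉₊ (⌊b i⌋₊ + 1)) := by
    ext j
    simp only [Finset.mem_Icc, Finset.mem_Ico]
    omega
  simp only [hIcc]
  have hm := tendsto_ceil_div hα hg ha
  have hm_atTop : Tendsto (fun i => ⌈a i⌉₊) l atTop :=
    tendsto_natCast_atTop_iff.1 (tendsto_atTop_of_tendsto_div hα hg hm)
  have hn : Tendsto (fun i => ((max ⌈a i⌉₊ (⌊b i⌋₊ + 1) : ℕ) : ℝ) / g i) l (𝓝 (max α β)) := by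
    refine (hm.max (tendsto_floor_add_one_div hβ hg hb)).congr' ?_
    filter_upwards [hg.eventually_ge_atTop 0] with i hi
    rw [max_div_div_right hi, Nat.cast_max]
  refine tendsto_sum_Ico_filter hA hm_atTop (fun _ => le_max_left _ _) ?_
  have hmax : max α β ≠ 0 := (lt_max_of_lt_left hα).ne'
  rw [posLog_eq_log_max_one (div_pos hβ hα).le, ← div_self hα.ne', max_div_div_right hα.le,
    log_div hmax hα.ne']
  refine ((hn.log hmax).sub (hm.log hα.ne')).congr' ?_
  filter_upwards [hg.eventually_ne_atTop 0, hm_atTop.eventually_ge_atTop 1] with i hi hmi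
  have hm0 : (⌈a i⌉₊ : ℝ) ≠ 0 := Nat.cast_ne_zero.2 (by omega)
  have hn0 : ((max ⌈a i⌉₊ (⌊b i⌋₊ + 1) : ℕ) : ℝ) ≠ 0 := Nat.cast_ne_zero.2 (by omega)
  rw [log_div hn0 hi, log_div hm0 hi, sub_sub_sub_cancel_right]

/-- The filter on pairs `(i, j)` for which convergence means convergence along `l`, uniformly in
the natural numbers `j` of the window `[a i, b i]`. -/
def windowFilter (l : Filter ι) (a b : ι → ℝ) : Filter (ι × ℕ) :=
  comap Prod.fst l ⊓ 𝓟 {p | a p.1 ≤ p.2 ∧ p.2 ≤ b p.1}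

lemma tendsto_fst_windowFilter : Tendsto Prod.fst (windowFilter l a b) l :=
  tendsto_comap.mono_left inf_le_left

lemma eventually_mem_windowFilter :
    ∀ᶠ p in windowFilter l a b, a p.1 ≤ p.2 ∧ p.2 ≤ b p.1 :=
  mem_inf_of_right (mem_principal_self _)

lemma tendsto_sum_of_tendsto_windowFilter {f : ι → ℕ → ℝ} {s : ι → Finset ℕ} {c τ : ℝ}
    (hs : ∀ᶠ i in l, ∀ j ∈ s i, a i ≤ j ∧ j ≤ b i)
    (hf : Tendsto (fun p : ι × ℕ => f p.1 p.2 * ((p.2 : ℝ) + 1)) (windowFilter l a b) (𝓝 c))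
    (hτ : Tendsto (fun i => ∑ j ∈ s i, 1 / ((j : ℝ) + 1)) l (𝓝 τ)) :
    Tendsto (fun i => ∑ j ∈ s i, f i j) l (𝓝 (c * τ)) := by
  have hlittle : (fun i => ∑ j ∈ s i, f i j - c * ∑ j ∈ s i, 1 / ((j : ℝ) + 1)) =o[l]
      fun i => ∑ j ∈ s i, 1 / ((j : ℝ) + 1) := by
    rw [Asymptotics.isLittleO_iff]
    intro ε hε
    have hnear := hf.eventually (Metric.closedBall_mem_nhds c hε)
    rw [windowFilter, eventually_inf_principal, eventually_comap] at hnear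
    filter_upwards [hnear, hs] with i hi hsi
    have hsum : 0 ≤ ∑ j ∈ s i, 1 / ((j : ℝ) + 1) :=
      Finset.sum_nonneg fun j _ => Nat.one_div_pos_of_nat.le
    rw [norm_of_nonneg hsum, Finset.mul_sum, Finset.mul_sum, ← Finset.sum_sub_distrib]
    refine norm_sum_le_of_le _ fun j hj => ?_
    have hclose : ‖f i j * (j + 1) - c‖ ≤ ε := hi (i, j) rfl (hsi j hj)
    have hfactor : f i j - c * (1 / (j + 1)) = (f i j * (j + 1) - c) * (1 / (j + 1)) := by
      field_simp
    rw [hfactor, norm_mul, norm_of_nonneg (Nat.one_div_pos_of_nat (α := ℝ)).le]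
    gcongr
  have hzero := (Asymptotics.isLittleO_one_iff ℝ).1 (hlittle.trans_isBigO (hτ.isBigO_one ℝ))
  simpa only [sub_add_cancel, zero_add] using hzero.add (hτ.const_mul c)

lemma eventually_mem_Icc_iff (hβ : 0 < β) (hg : Tendsto g l atTop)
    (hb : Tendsto (fun i => b i / g i) l (𝓝 β)) :
    ∀ᶠ i in l, ∀ j, j ∈ Finset.Icc ⌈a i⌉₊ ⌊b i⌋₊ ↔ a i ≤ j ∧ j ≤ b i := by
  filter_upwards [(tendsto_atTop_of_tendsto_div hβ hg hb).eventually_ge_atTop 0] with i hi j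
  rw [Finset.mem_Icc, Nat.ceil_le, Nat.le_floor_iff hi]

theorem tendsto_sum_Icc_filter_of_tendsto_windowFilter {f : ι → ℕ → ℝ} {c : ℝ}
    (hA : ∀ n, |(Nat.count A n : ℝ) - d * n| ≤ C) (hα : 0 < α) (hβ : 0 < β)
    (hg : Tendsto g l atTop) (ha : Tendsto (fun i => a i / g i) l (𝓝 α))
    (hb : Tendsto (fun i => b i / g i) l (𝓝 β))
    (hf : Tendsto (fun p : ι × ℕ => f p.1 p.2 * ((p.2 : ℝ) + 1)) (windowFilter l a b) (𝓝 c)) :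
    Tendsto (fun i => ∑ j ∈ Finset.Icc ⌈a i⌉₊ ⌊b i⌋₊ with A j, f i j) l
      (𝓝 (c * (d * log⁺ (β / α)))) := by
  refine tendsto_sum_of_tendsto_windowFilter ?_ hf (tendsto_sum_Icc_filter hA hα hβ hg ha hb)
  filter_upwards [eventually_mem_Icc_iff hβ hg hb] with i hi j hj
  exact (hi j).1 (Finset.mem_filter.1 hj).1

end ExponentWindows

section WeightedPrimeCounts

lemma QH_eq_primesBetween (δ ξ x H : ℝ) :
    QH δ ξ x H = primesBetween (yy δ x / H / ξ) (yy δ x / H) := by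
  rw [div_div, mul_comm H ξ]
  rfl

variable {ι : Type*} {l : Filter ι} {x H : ι → ℝ} {δ ξ M : ℝ}

lemma eventually_mul_zz_le_yy_div (hδ : 0 < δ) (hξ : 0 < ξ) (hx : Tendsto x l atTop)
    (hH : ∀ᶠ i in l, 0 < H i) (hH_le : ∀ᶠ i in l, H i ≤ yy δ (x i) / (ξ * zz δ (x i))) :
    ∀ᶠ i in l, ξ * zz δ (x i) ≤ yy δ (x i) / H i := by
  filter_upwards [hH, hH_le, hx.eventually (eventually_zz_pos hδ)] with i hHi hle hz
  exact (le_div_comm₀ hHi (by positivity)).1 hle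

lemma tendsto_log_zz_div_log_yy_div (hδ : 0 < δ) (hx : Tendsto x l atTop)
    (hH : ∀ᶠ i in l, 1 ≤ H i) (hzH : ∀ᶠ i in l, zz δ (x i) ≤ yy δ (x i) / H i) :
    Tendsto (fun i => log (zz δ (x i)) / log (yy δ (x i) / H i)) l (𝓝 1) := by
  refine tendsto_of_tendsto_of_tendsto_of_le_of_le' ((tendsto_log_zz_div_log_yy hδ).comp hx)
    tendsto_const_nhds ?_ ?_
  all_goals
    filter_upwards [hH, hzH, ((tendsto_zz_atTop hδ).comp hx).eventually_gt_atTop 1]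
      with i hHi hle hz
    rw [Function.comp_apply] at hz
    have hlogz : 0 < log (zz δ (x i)) := log_pos hz
    have hlogzH : log (zz δ (x i)) ≤ log (yy δ (x i) / H i) := log_le_log (by linarith) hle
  · have hlogHy : log (yy δ (x i) / H i) ≤ log (yy δ (x i)) :=
      log_le_log (by linarith) (div_le_self (Nat.cast_nonneg _) hHi)
    exact div_le_div_of_nonneg_left hlogz.le (hlogz.trans_le hlogzH) hlogHy
  · exact div_le_one_of_le₀ hlogzH (hlogz.trans_le hlogzH).le

theorem tendsto_card_QH_mul_div_sigBetween_mul_log (hδ : 0 < δ) (hξ : 1 < ξ) (hM : 0 < M)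
    (hx : Tendsto x l atTop) (hH_ge : ∀ᶠ i in l, 2 * yy δ (x i) / x i ≤ H i)
    (hH_le : ∀ᶠ i in l, H i ≤ yy δ (x i) / (ξ * zz δ (x i))) :
    Tendsto (fun i => (QH δ ξ (x i) (H i)).card * H i /
        sigBetween (H i ^ M) (zz δ (x i)) / yy δ (x i) * log (H i)) l
      (𝓝 ((1 - 1 / ξ) / M)) := by
  have hξ0 : 0 < ξ := one_pos.trans hξ
  have hH_atTop : Tendsto H l atTop :=
    tendsto_atTop_mono' l hH_ge ((tendsto_two_mul_yy_div_atTop hδ).comp hx)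
  have hz_atTop : Tendsto (fun i => zz δ (x i)) l atTop := (tendsto_zz_atTop hδ).comp hx
  have hzH := eventually_mul_zz_le_yy_div hδ hξ0 hx (hH_atTop.eventually_gt_atTop 0) hH_le
  have hprimes := (tendsto_card_primesBetween_div_mul_log_div hξ).comp
    (tendsto_atTop_mono' l hzH (hz_atTop.const_mul_atTop hξ0))
  have hpow_le : ∀ᶠ i in l, H i ^ M ≤ zz δ (x i) := by
    filter_upwards [hH_atTop.eventually_gt_atTop 0, hH_le,
      hx.eventually (eventually_yy_div_rpow_le_zz hδ hξ0 M)] with i hHi hle hpow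
    exact (rpow_le_rpow hHi.le hle hM.le).trans hpow
  have hsigma := tendsto_inv_sigBetween_mul_log_div_log
    ((tendsto_rpow_atTop hM).comp hH_atTop) hpow_le
  have hratio := tendsto_log_zz_div_log_yy_div hδ hx (hH_atTop.eventually_ge_atTop 1) <| by
    filter_upwards [hzH, hz_atTop.eventually_ge_atTop 0] with i hle hz
    exact (le_mul_of_one_le_left hz hξ.le).trans hle
  have hlim := ((hprimes.mul hsigma).mul hratio).div_const M
  rw [mul_one, mul_one] at hlim
  refine hlim.congr' ?_
  filter_upwards [hH_atTop.eventually_gt_atTop 0, hz_atTop.eventually_gt_atTop 1, hzH,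
    ((tendsto_yy_atTop hδ).comp hx).eventually_gt_atTop 0] with i hHi hz hle hy
  have hlogz : log (zz δ (x i)) ≠ 0 := (log_pos hz).ne'
  have hlogyH : log (yy δ (x i) / H i) ≠ 0 :=
    (log_pos (hz.trans_le ((le_mul_of_one_le_left (by linarith) hξ.le).trans hle))).ne'
  simp only [Function.comp_apply] at hy ⊢
  rw [← QH_eq_primesBetween, log_rpow hHi]
  field_simp

end WeightedPrimeCounts

section ExponentsOfScales

variable {δ ξ M : ℝ}

/-- The real exponent `e` with `ξ ^ e = 2y/x`, the lower end of the range of `j` for which `ξ ^ j`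
lies in `𝔥`. -/
noncomputable def minExponent (δ ξ x : ℝ) : ℝ := logb ξ (2 * yy δ x / x)

/-- The real exponent `e` with `ξ ^ e = y/(ξz)`, the upper end of the range of `j` for which
`ξ ^ j` lies in `𝔥`. -/
noncomputable def maxExponent (δ ξ x : ℝ) : ℝ := logb ξ (yy δ x / (ξ * zz δ x))

lemma eventually_exponent_mem_iff (hδ : 0 < δ) (hξ : 1 < ξ) : ∀ᶠ x in atTop, ∀ j : ℕ,
    minExponent δ ξ x ≤ j ∧ j ≤ maxExponent δ ξ x ↔
      2 * yy δ x / x ≤ ξ ^ j ∧ ξ ^ j ≤ yy δ x / (ξ * zz δ x) := by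
  filter_upwards [eventually_gt_atTop 0, (tendsto_yy_atTop hδ).eventually_gt_atTop 0,
    eventually_zz_pos hδ] with x hx hy hz j
  rw [minExponent, maxExponent, logb_le_iff_le_rpow hξ (by positivity),
    le_logb_iff_rpow_le hξ (by positivity), rpow_natCast]

lemma tendsto_minExponent_div (hδ : 0 < δ) (ξ : ℝ) :
    Tendsto (fun x => minExponent δ ξ x / log (log x)) atTop (𝓝 (δ / log ξ)) := by
  simpa only [minExponent, logb, div_right_comm] using
    (tendsto_log_two_mul_yy_div hδ).div_const (log ξ)

lemma tendsto_maxExponent_div (hδ : 0 < δ) (hξ : 0 < ξ) :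
    Tendsto (fun x => maxExponent δ ξ x / log (log x)) atTop (𝓝 (1 / 2 / log ξ)) := by
  simpa only [maxExponent, logb, div_right_comm _ (log ξ)] using
    (tendsto_log_yy_div_mul_zz hδ hξ).div_const (log ξ)

lemma tendsto_card_QH_pow_mul_div_sigBetween (hδ : 0 < δ) (hξ : 1 < ξ) (hM : 0 < M) :
    Tendsto (fun p : ℝ × ℕ => (QH δ ξ p.1 (ξ ^ p.2)).card * ξ ^ p.2 /
        sigBetween ((ξ ^ p.2) ^ M) (zz δ p.1) / yy δ p.1 * ((p.2 : ℝ) + 1))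
      (windowFilter atTop (minExponent δ ξ) (maxExponent δ ξ))
      (𝓝 ((1 - 1 / ξ) / (M * log ξ))) := by
  have hlogξ : 0 < log ξ := log_pos hξ
  have hwindow : ∀ᶠ p : ℝ × ℕ in windowFilter atTop (minExponent δ ξ) (maxExponent δ ξ),
      2 * yy δ p.1 / p.1 ≤ ξ ^ p.2 ∧ ξ ^ p.2 ≤ yy δ p.1 / (ξ * zz δ p.1) := by
    filter_upwards [eventually_mem_windowFilter,
      tendsto_fst_windowFilter.eventually (eventually_exponent_mem_iff hδ hξ)]
      with p hp hiff using (hiff p.2).1 hp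
  have hterm := tendsto_card_QH_mul_div_sigBetween_mul_log hδ hξ hM tendsto_fst_windowFilter
    (hwindow.mono fun _ => And.left) (hwindow.mono fun _ => And.right)
  have hj : Tendsto (fun p : ℝ × ℕ => (p.2 : ℝ))
      (windowFilter atTop (minExponent δ ξ) (maxExponent δ ξ)) atTop :=
    tendsto_atTop_mono' _ (eventually_mem_windowFilter.mono fun _ => And.left)
      ((tendsto_atTop_of_tendsto_div (div_pos hδ hlogξ) tendsto_log_log_atTop
        (tendsto_minExponent_div hδ ξ)).comp tendsto_fst_windowFilter)
  have hlim := ((hterm.mul ((hj.const_div_atTop 1).const_add 1)).div_const (log ξ))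
  rw [add_zero, mul_one, div_div] at hlim
  refine hlim.congr' ?_
  filter_upwards [hj.eventually_ne_atTop 0] with p hp
  rw [log_pow]
  field_simp

lemma eventually_tsum_ite_eq_sum (hδ : 0 < δ) (hξ : 1 < ξ) (A : ℕ → Prop) [DecidablePred A]
    (f : ℝ → ℕ → ℝ) : ∀ᶠ x in atTop,
      ∑' j : ℕ, (if A j ∧ 2 * yy δ x / x ≤ ξ ^ j ∧ ξ ^ j ≤ yy δ x / (ξ * zz δ x)
        then f x j else 0) =
      ∑ j ∈ Finset.Icc ⌈minExponent δ ξ x⌉₊ ⌊maxExponent δ ξ x⌋₊ with A j, f x j := by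
  filter_upwards [eventually_exponent_mem_iff hδ hξ,
    eventually_mem_Icc_iff (div_pos one_half_pos (log_pos hξ)) tendsto_log_log_atTop
      (tendsto_maxExponent_div hδ (one_pos.trans hξ))] with x hscale hIcc
  have hmem (j : ℕ) : j ∈ {j ∈ Finset.Icc ⌈minExponent δ ξ x⌉₊ ⌊maxExponent δ ξ x⌋₊ | A j} ↔
      A j ∧ 2 * yy δ x / x ≤ ξ ^ j ∧ ξ ^ j ≤ yy δ x / (ξ * zz δ x) := by
    rw [Finset.mem_filter, hIcc, hscale, and_comm]
  simp only [← hmem]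
  rw [tsum_eq_sum fun j hj => if_neg hj]
  exact Finset.sum_congr rfl fun j hj => if_pos hj

theorem stmt11_general {d C : ℝ} {A : ℕ → Prop} [DecidablePred A] (K : ℕ) (hδ : 0 < δ)
    (hM : 0 < M) (hξ : 1 < ξ) (hA : ∀ n, |(Nat.count A n : ℝ) - d * n| ≤ C) :
    Tendsto (fun x => (K : ℝ) / ((K + 1) * yy δ x) *
        ∑' j : ℕ, if A j ∧ 2 * yy δ x / x ≤ ξ ^ j ∧ ξ ^ j ≤ yy δ x / (ξ * zz δ x)
          then (QH δ ξ x (ξ ^ j)).card * ξ ^ j / sigBetween ((ξ ^ j) ^ M) (zz δ x) else 0)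
      atTop (𝓝 (K * (ξ - 1) * (d * log⁺ (1 / (2 * δ))) / ((K + 1) * M * ξ * log ξ))) := by
  have hlogξ : 0 < log ξ := log_pos hξ
  have hsum := (tendsto_sum_Icc_filter_of_tendsto_windowFilter hA (div_pos hδ hlogξ)
    (div_pos one_half_pos hlogξ) tendsto_log_log_atTop (tendsto_minExponent_div hδ ξ)
    (tendsto_maxExponent_div hδ (one_pos.trans hξ))
    (f := fun x j => (QH δ ξ x (ξ ^ j)).card * ξ ^ j / sigBetween ((ξ ^ j) ^ M) (zz δ x) / yy δ x)
    (tendsto_card_QH_pow_mul_div_sigBetween hδ hξ hM)).const_mul (K / (K + 1) : ℝ)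
  have hlimit : K / (K + 1) * ((1 - 1 / ξ) / (M * log ξ) *
      (d * log⁺ (1 / 2 / log ξ / (δ / log ξ)))) =
      K * (ξ - 1) * (d * log⁺ (1 / (2 * δ))) / ((K + 1) * M * ξ * log ξ) := by
    rw [div_div_div_cancel_right₀ hlogξ.ne', div_div]
    field_simp
  rw [hlimit] at hsum
  refine hsum.congr' ?_
  filter_upwards [eventually_tsum_ite_eq_sum hδ hξ A fun x j => (QH δ ξ x (ξ ^ j)).card * ξ ^ j /
    sigBetween ((ξ ^ j) ^ M) (zz δ x)] with x hx
  rw [hx, ← Finset.sum_div, ← div_div]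
  ring

end ExponentsOfScales

section Parity

lemma abs_count_modEq_two_sub_le (r n : ℕ) :
    |(Nat.count (· ≡ r [MOD 2]) n : ℝ) - 1 / 2 * n| ≤ 1 := by
  have hcount := Nat.count_modEq_card n two_pos r
  have hlower : n ≤ 2 * Nat.count (· ≡ r [MOD 2]) n + 1 := by split_ifs at hcount <;> omega
  have hupper : 2 * Nat.count (· ≡ r [MOD 2]) n ≤ n + 2 := by split_ifs at hcount <;> omega
  rify at hlower hupper
  rw [abs_le]
  constructor <;> linarith

lemma abs_count_even_sub_le (n : ℕ) : |(Nat.count Even n : ℝ) - 1 / 2 * n| ≤ 1 := by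
  simpa only [Nat.ModEq, Nat.zero_mod, ← Nat.even_iff] using abs_count_modEq_two_sub_le 0 n

lemma abs_count_odd_sub_le (n : ℕ) : |(Nat.count Odd n : ℝ) - 1 / 2 * n| ≤ 1 := by
  simpa only [Nat.ModEq, Nat.one_mod, ← Nat.odd_iff] using abs_count_modEq_two_sub_le 1 n

end Parity

theorem stmt11 (δ M : ℝ) (K : ℕ) (ξ : ℝ)
    (hδ0 : 0 < δ) (hδ1 : δ < 1/2) (hM : 0 < M) (hK : 2 ≤ K) (hξ : 1 < ξ) :
    Filter.Tendsto (fun x : ℝ =>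
        (K : ℝ) / (((K : ℝ) + 1) * (yy δ x : ℝ)) *
          ∑' j : ℕ, if Even j ∧ 2 * (yy δ x : ℝ) / x ≤ ξ ^ j ∧
              ξ ^ j ≤ (yy δ x : ℝ) / (ξ * zz δ x)
            then ((QH δ ξ x (ξ ^ j)).card : ℝ) * ξ ^ j / sigBetween ((ξ ^ j : ℝ) ^ M) (zz δ x)
            else 0)
      Filter.atTop
      (nhds ((K : ℝ) * (ξ - 1) * Real.log (1 / (2 * δ)) /
        (2 * ((K : ℝ) + 1) * M * ξ * Real.log ξ))) ∧
    Filter.Tendsto (fun x : ℝ =>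
        (K : ℝ) / (((K : ℝ) + 1) * (yy δ x : ℝ)) *
          ∑' j : ℕ, if Odd j ∧ 2 * (yy δ x : ℝ) / x ≤ ξ ^ j ∧
              ξ ^ j ≤ (yy δ x : ℝ) / (ξ * zz δ x)
            then ((QH δ ξ x (ξ ^ j)).card : ℝ) * ξ ^ j / sigBetween ((ξ ^ j : ℝ) ^ M) (zz δ x)
            else 0)
      Filter.atTop
      (nhds ((K : ℝ) * (ξ - 1) * Real.log (1 / (2 * δ)) /
        (2 * ((K : ℝ) + 1) * M * ξ * Real.log ξ))) := by
  have hlog : log⁺ (1 / (2 * δ)) = log (1 / (2 * δ)) :=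
    posLog_eq_log ((one_le_one_div (by linarith) (by linarith)).trans (le_abs_self _))
  have hlimit : (K : ℝ) * (ξ - 1) * log (1 / (2 * δ)) / (2 * (K + 1) * M * ξ * log ξ) =
      K * (ξ - 1) * (1 / 2 * log⁺ (1 / (2 * δ))) / ((K + 1) * M * ξ * log ξ) := by
    rw [hlog]
    field_simp
  rw [hlimit]
  exact ⟨stmt11_general K hδ0 hM hξ abs_count_even_sub_le,
    stmt11_general K hδ0 hM hξ abs_count_odd_sub_le⟩
end

section
/- Fix δ ∈ (0,1/2). There exist C > 0 and x₀ such that for all x ≥ x₀ and every integer N: #{b ∈ {0,…,P_z − 1} : #(S_z(b) ∩ [1,y]) > 2σ_z y} ≤ C·P_z/ln x, and #{b ∈ {0,…,P_z − 1} : #(S_z(−N−b) ∩ [−y,−1]) > 2σ_z y} ≤ C·P_z/ln x. -/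
open scoped Classical

/-!
For uniformly random `b` modulo `P_z`, let `X` be the number of survivors in an interval with `Y`
elements, so that `𝔼 X = σY` with `σ = σ_z`. For `n ≠ m` in the interval, the Chinese remainder
theorem gives

  `P_z · ℙ(n and m both survive) = ∏ p, (p - 2 + [p ∣ n - m])`.

Expand this product over the sets `t` of primes contributing the indicator. For fixed `n` and `t`,
at most `Y / ∏ p ∈ t, p` values `m ≠ n` of the interval are congruent to `n` modulo `∏ p ∈ t, p`,
so the sum over `m ≠ n` is at most `Y ∏ p, (p - 2 + 1 / p) = Y P_z σ²`. Hence `Var X ≤ σY`, and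
Chebyshev's inequality gives `ℙ(X > 2σY) ≤ 1 / (σY)`. Comparing `σ` with a telescoping product over
odd integers gives `σY ≥ √Y / 2`, which for large `x` exceeds every power of `log x`. The second
count is the first one for a reflected interval.
-/

section Sieve

open Finset

section Congruences

theorem card_filter_range_prod_natCast_mem {ι : Type*} [Fintype ι] {a : ι → ℕ}
    (hcop : Pairwise (Function.onFun Nat.Coprime a)) (hpos : ∀ i, 0 < a i)
    (A : ∀ i, Finset (ZMod (a i))) :
    #{b ∈ range (∏ i, a i) | ∀ i, ((b : ℕ) : ZMod (a i)) ∈ A i} = ∏ i, #(A i) := by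
  have hP : 0 < ∏ i, a i := prod_pos fun i _ => hpos i
  have : NeZero (∏ i, a i) := ⟨hP.ne'⟩
  let e := ZMod.prodEquivPi a hcop
  have he (b : ℕ) : e b = fun i => (b : ZMod (a i)) := map_natCast e b
  rw [← Fintype.card_piFinset]
  refine card_bij' (fun b _ => e b) (fun c _ => (e.symm c).val) ?_ ?_ ?_ ?_
  · intro b hb
    simpa only [he, Fintype.mem_piFinset] using (mem_filter.1 hb).2
  · intro c hc
    refine mem_filter.2 ⟨mem_range.2 (ZMod.val_lt _), fun i => ?_⟩
    have := congrFun (he (e.symm c).val) i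
    rw [ZMod.natCast_zmod_val, e.apply_symm_apply] at this
    exact this ▸ Fintype.mem_piFinset.1 hc i
  · intro b hb
    rw [e.symm_apply_apply, ZMod.val_cast_of_lt (mem_range.1 (mem_filter.1 hb).1)]
  · intro c _
    rw [ZMod.natCast_zmod_val, e.apply_symm_apply]

theorem mul_card_erase_Icc_filter_modEq_le {d : ℕ} (hd : 0 < d) {lo hi n : ℤ}
    (hn : n ∈ Icc lo hi) : d * #{m ∈ (Icc lo hi).erase n | m ≡ n [ZMOD d]} ≤ hi - lo := by
  have hd' : (0 : ℤ) < d := by exact_mod_cast hd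
  obtain ⟨hlo, hhi⟩ := mem_Icc.1 hn
  have hsub : {m ∈ (Icc lo hi).erase n | m ≡ n [ZMOD d]} ⊆
      {m ∈ Ico lo n | m ≡ n [ZMOD d]} ∪ {m ∈ Ioc n hi | m ≡ n [ZMOD d]} := by
    intro m
    simp only [mem_union, mem_filter, mem_erase, mem_Icc, mem_Ico, mem_Ioc]
    grind
  have hmul {k : ℤ} (hk : 0 ≤ k) : (d : ℤ) * max ⌊(k : ℚ) / (d : ℤ)⌋ 0 ≤ k := by
    rw [Int.cast_natCast, Rat.floor_intCast_div_natCast, max_eq_left (by positivity)]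
    exact Int.mul_ediv_self_le hd'.ne'
  have hleft : (d : ℤ) * #{m ∈ Ico lo n | m ≡ n [ZMOD d]} ≤ n - lo := by
    rw [Int.Ico_filter_modEq_card _ _ hd', sub_self, zero_div, Int.ceil_zero, zero_sub,
      ← Int.floor_neg, ← neg_div, neg_sub, ← Int.cast_sub]
    exact hmul (sub_nonneg.2 hlo)
  have hright : (d : ℤ) * #{m ∈ Ioc n hi | m ≡ n [ZMOD d]} ≤ hi - n := by
    rw [Int.Ioc_filter_modEq_card _ _ hd', sub_self, zero_div, Int.floor_zero, sub_zero,
      ← Int.cast_sub]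
    exact hmul (sub_nonneg.2 hhi)
  have hcard := (card_le_card hsub).trans (card_union_le _ _)
  zify at hcard
  nlinarith

theorem sum_prod_ite_modEq_add_le {s : Finset ℕ} (hcop : (s : Set ℕ).Pairwise Nat.Coprime)
    (hpos : ∀ p ∈ s, 0 < p) {w : ℕ → ℝ} (hw : ∀ p ∈ s, 0 ≤ w p) {lo hi n : ℤ}
    (hn : n ∈ Icc lo hi) :
    ∑ m ∈ (Icc lo hi).erase n, ∏ p ∈ s, ((if m ≡ n [ZMOD p] then 1 else 0) + w p) ≤
      ((hi - lo : ℤ) : ℝ) * ∏ p ∈ s, (1 / (p : ℝ) + w p) := by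
  have hmod {t : Finset ℕ} (ht : t ⊆ s) (m : ℤ) :
      (∀ p ∈ t, m ≡ n [ZMOD p]) ↔ m ≡ n [ZMOD (∏ p ∈ t, p : ℕ)] := by
    simp only [Int.modEq_iff_dvd, Nat.cast_prod]
    refine ⟨prod_dvd_of_coprime fun p hp q hq hpq => ?_,
      fun h p hp => (dvd_prod_of_mem (fun p : ℕ => (p : ℤ)) hp).trans h⟩
    exact Nat.isCoprime_iff_coprime.2 (hcop (ht hp) (ht hq) hpq)
  simp_rw [prod_add, prod_boole]
  rw [sum_comm, mul_sum]
  refine sum_le_sum fun t ht => ?_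
  have hts := mem_powerset.1 ht
  have hd : 0 < ∏ p ∈ t, p := prod_pos fun p hp => hpos p (hts hp)
  simp_rw [hmod hts]
  rw [← sum_mul, ← mul_assoc]
  refine mul_le_mul_of_nonneg_right ?_ (prod_nonneg fun p hp => hw p (mem_sdiff.1 hp).1)
  rw [sum_boole, prod_div_distrib, prod_const_one, ← Nat.cast_prod, mul_one_div,
    le_div_iff₀' (by exact_mod_cast hd)]
  exact_mod_cast mul_card_erase_Icc_filter_modEq_le hd hn

theorem card_compl_pair_intCast {p : ℕ} [NeZero p] (hp : 2 ≤ p) (n m : ℤ) :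
    (#({(n : ZMod p), (m : ZMod p)} : Finset (ZMod p))ᶜ : ℝ) =
      (if m ≡ n [ZMOD p] then 1 else 0) + ((p : ℝ) - 2) := by
  rw [card_compl, ZMod.card]
  split_ifs with hmod
  · rw [(ZMod.intCast_eq_intCast_iff m n p).2 hmod, pair_eq_singleton, card_singleton,
      Nat.cast_sub (by omega)]
    push_cast
    ring
  · have hne : (n : ZMod p) ≠ m := fun h => hmod ((ZMod.intCast_eq_intCast_iff n m p).1 h).symm
    rw [card_pair hne, Nat.cast_sub hp]
    push_cast
    ring

end Congruences

/-- The integer `n` survives the sieve that removes the residue class of `b` modulo every element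
of `s`. With `s = primesUpTo t` this is membership in the sifted set `S_t(b)`. -/
def Survives (s : Finset ℕ) (b n : ℤ) : Prop :=
  ∀ p ∈ s, ¬ (p : ℤ) ∣ n - b

/-- The proportion of integers surviving a sieve by one residue class modulo each element of `s`,
for pairwise coprime moduli. With `s = primesUpTo t` this is `σ_t`. -/
noncomputable def sieveDensity (s : Finset ℕ) : ℝ :=
  ∏ p ∈ s, (1 - 1 / (p : ℝ))

/-- The number of elements of `I` that survive the sieve by `s` shifted by `b`: the random variable
whose variance over `b` is estimated. -/
noncomputable def survivorCount (s : Finset ℕ) (I : Finset ℤ) (b : ℤ) : ℕ :=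
  #{n ∈ I | Survives s b n}

theorem sieveDensity_nonneg (s : Finset ℕ) : 0 ≤ sieveDensity s :=
  prod_nonneg fun p _ => sub_nonneg.2 (by rw [one_div]; exact Nat.cast_inv_le_one p)

theorem sieveDensity_eq_mul_erase {s : Finset ℕ} {p : ℕ} (hp : p ∈ s) :
    sieveDensity s = (1 - 1 / (p : ℝ)) * sieveDensity (s.erase p) :=
  (mul_prod_erase s _ hp).symm

theorem survives_iff_natCast_ne {s : Finset ℕ} {b : ℕ} {n : ℤ} :
    Survives s b n ↔ ∀ p ∈ s, (b : ZMod p) ≠ n := by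
  refine forall₂_congr fun p _ => not_congr ?_
  rw [← Int.modEq_iff_dvd, ← ZMod.intCast_eq_intCast_iff, Int.cast_natCast]

theorem sum_survivorCount_sq (s B : Finset ℕ) (I : Finset ℤ) :
    ∑ b ∈ B, (survivorCount s I b : ℝ) ^ 2 =
      ∑ n ∈ I, ∑ m ∈ I, (#{b ∈ B | Survives s (b : ℕ) n ∧ Survives s (b : ℕ) m} : ℝ) := by
  simp_rw [survivorCount, ← sum_boole, sq, sum_mul_sum, ite_zero_mul_ite_zero, mul_one]
  rw [sum_comm]
  exact sum_congr rfl fun n _ => sum_comm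

section Moments

variable {s : Finset ℕ} (hcop : (s : Set ℕ).Pairwise Nat.Coprime) (htwo : ∀ p ∈ s, 2 ≤ p)

include hcop htwo

theorem card_survives_and_survives (n m : ℤ) :
    (#{b ∈ range (∏ p ∈ s, p) | Survives s (b : ℕ) n ∧ Survives s (b : ℕ) m} : ℝ) =
      ∏ p ∈ s, ((if m ≡ n [ZMOD p] then 1 else 0) + ((p : ℝ) - 2)) := by
  have hne (p : s) : NeZero (p : ℕ) := ⟨(zero_lt_two.trans_le (htwo p p.2)).ne'⟩
  have hcount := card_filter_range_prod_natCast_mem (a := fun p : s => (p : ℕ))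
    (fun p q hpq => hcop p.2 q.2 (Subtype.coe_ne_coe.2 hpq)) (fun p => Nat.pos_of_neZero _)
    fun p => ({(n : ZMod p), (m : ZMod p)} : Finset (ZMod p))ᶜ
  rw [prod_coe_sort s fun p => p] at hcount
  simp only [mem_compl, mem_insert, mem_singleton, not_or, Subtype.forall, forall_and] at hcount
  simp only [survives_iff_natCast_ne, ne_eq]
  rw [hcount, Nat.cast_prod, ← prod_coe_sort s]
  exact prod_congr rfl fun p _ => card_compl_pair_intCast (htwo p p.2) n m

theorem card_survives (n : ℤ) :
    (#{b ∈ range (∏ p ∈ s, p) | Survives s (b : ℕ) n} : ℝ) =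
      (∏ p ∈ s, p : ℕ) * sieveDensity s := by
  have h := card_survives_and_survives hcop htwo n n
  simp only [and_self, Int.ModEq.refl, if_true] at h
  rw [h, sieveDensity, Nat.cast_prod, ← prod_mul_distrib]
  refine prod_congr rfl fun p hp => ?_
  have : (p : ℝ) ≠ 0 := by exact_mod_cast (zero_lt_two.trans_le (htwo p hp)).ne'
  field_simp
  ring

variable {lo hi : ℤ}

theorem sum_card_survives_and_survives_le {n : ℤ} (hn : n ∈ Icc lo hi) :
    ∑ m ∈ (Icc lo hi).erase n,
      (#{b ∈ range (∏ p ∈ s, p) | Survives s (b : ℕ) n ∧ Survives s (b : ℕ) m} : ℝ) ≤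
      ((hi - lo : ℤ) : ℝ) * ((∏ p ∈ s, p : ℕ) * sieveDensity s ^ 2) := by
  have hw : ∀ p ∈ s, (0 : ℝ) ≤ p - 2 := fun p hp => sub_nonneg.2 (by exact_mod_cast htwo p hp)
  simp_rw [card_survives_and_survives hcop htwo]
  refine (sum_prod_ite_modEq_add_le hcop
    (fun p hp => zero_lt_two.trans_le (htwo p hp)) hw hn).trans_eq ?_
  rw [sieveDensity, Nat.cast_prod, ← prod_pow, ← prod_mul_distrib]
  congr 1
  refine prod_congr rfl fun p hp => ?_
  have : (p : ℝ) ≠ 0 := by exact_mod_cast (zero_lt_two.trans_le (htwo p hp)).ne'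
  field_simp
  ring

theorem sum_survivorCount (I : Finset ℤ) :
    ∑ b ∈ range (∏ p ∈ s, p), (survivorCount s I b : ℝ) =
      (∏ p ∈ s, p : ℕ) * (sieveDensity s * #I) := by
  calc ∑ b ∈ range (∏ p ∈ s, p), (survivorCount s I b : ℝ)
      = ∑ n ∈ I, (#{b ∈ range (∏ p ∈ s, p) | Survives s (b : ℕ) n} : ℝ) := by
        exact_mod_cast sum_card_bipartiteAbove_eq_sum_card_bipartiteBelow
          fun (b : ℕ) n => Survives s b n
    _ = (∏ p ∈ s, p : ℕ) * (sieveDensity s * #I) := by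
        simp_rw [card_survives hcop htwo]
        rw [sum_const, nsmul_eq_mul]
        ring

theorem sum_survivorCount_sq_le :
    ∑ b ∈ range (∏ p ∈ s, p), (survivorCount s (Icc lo hi) b : ℝ) ^ 2 ≤
      (∏ p ∈ s, p : ℕ) *
        (sieveDensity s * #(Icc lo hi) + (sieveDensity s * #(Icc lo hi)) ^ 2) := by
  set P : ℝ := ((∏ p ∈ s, p : ℕ) : ℝ)
  set σ := sieveDensity s
  set Y : ℝ := (#(Icc lo hi) : ℝ)
  have hrow : ∀ n ∈ Icc lo hi, ∑ m ∈ Icc lo hi,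
      (#{b ∈ range (∏ p ∈ s, p) | Survives s (b : ℕ) n ∧ Survives s (b : ℕ) m} : ℝ) ≤
        P * σ + Y * (P * σ ^ 2) := by
    intro n hn
    have hY : ((hi - lo : ℤ) : ℝ) ≤ Y := by
      have : hi - lo ≤ (#(Icc lo hi) : ℤ) := by rw [Int.card_Icc]; omega
      exact (Int.cast_le.2 this).trans_eq (Int.cast_natCast _)
    rw [← add_sum_erase _ _ hn]
    simp only [and_self]
    gcongr
    · exact (card_survives hcop htwo n).le
    · exact (sum_card_survives_and_survives_le hcop htwo hn).trans (by gcongr)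
  rw [sum_survivorCount_sq]
  refine (sum_le_card_nsmul _ _ _ hrow).trans_eq ?_
  rw [nsmul_eq_mul]
  ring

theorem sum_survivorCount_sub_sq_le :
    ∑ b ∈ range (∏ p ∈ s, p),
        ((survivorCount s (Icc lo hi) b : ℝ) - sieveDensity s * #(Icc lo hi)) ^ 2 ≤
      (∏ p ∈ s, p : ℕ) * (sieveDensity s * #(Icc lo hi)) := by
  have hmean := sum_survivorCount hcop htwo (Icc lo hi)
  have hsq := sum_survivorCount_sq_le hcop htwo (lo := lo) (hi := hi)
  simp only [sub_sq, sum_add_distrib, sum_sub_distrib, ← sum_mul, ← mul_sum, sum_const,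
    card_range, nsmul_eq_mul, hmean]
  linarith

theorem card_lt_survivorCount_mul_le :
    (#{b ∈ range (∏ p ∈ s, p) |
        2 * sieveDensity s * #(Icc lo hi) < survivorCount s (Icc lo hi) (b : ℕ)} : ℝ) *
        (sieveDensity s * #(Icc lo hi)) ≤ (∏ p ∈ s, p : ℕ) := by
  set μ : ℝ := sieveDensity s * #(Icc lo hi)
  set B := {b ∈ range (∏ p ∈ s, p) |
    2 * sieveDensity s * #(Icc lo hi) < survivorCount s (Icc lo hi) (b : ℕ)}
  have hμ0 : 0 ≤ μ := mul_nonneg (sieveDensity_nonneg s) (Nat.cast_nonneg _)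
  obtain hzero | hpos := hμ0.eq_or_lt
  · rw [← hzero, mul_zero]
    exact Nat.cast_nonneg _
  have hdev : ∀ b ∈ B, μ ^ 2 ≤ ((survivorCount s (Icc lo hi) b : ℝ) - μ) ^ 2 := by
    intro b hb
    have := (mem_filter.1 hb).2
    exact pow_le_pow_left₀ hpos.le (by linarith) 2
  refine le_of_mul_le_mul_right ?_ hpos
  calc #B * μ * μ
      = #B • μ ^ 2 := by rw [nsmul_eq_mul]; ring
    _ ≤ ∑ b ∈ B, ((survivorCount s (Icc lo hi) b : ℝ) - μ) ^ 2 := card_nsmul_le_sum _ _ _ hdev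
    _ ≤ ∑ b ∈ range (∏ p ∈ s, p), ((survivorCount s (Icc lo hi) b : ℝ) - μ) ^ 2 :=
        sum_le_sum_of_subset_of_nonneg (filter_subset _ _) fun _ _ _ => sq_nonneg _
    _ ≤ (∏ p ∈ s, p : ℕ) * μ := sum_survivorCount_sub_sq_le hcop htwo

end Moments

section Density

/-- For odd `m` one has `(1 - 1 / m) ^ 2 ≥ (m - 2) / m`, and the product of the right-hand sides
over odd `m` telescopes. -/
theorem one_le_mul_sieveDensity_sq_of_odd (k : ℕ) {s : Finset ℕ}
    (hs : ∀ m ∈ s, Odd m ∧ 1 < m ∧ m ≤ 2 * k + 1) : 1 ≤ (2 * k + 1) * sieveDensity s ^ 2 := by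
  induction k generalizing s with
  | zero =>
    have : s = ∅ := eq_empty_of_forall_notMem fun m hm => by have := hs m hm; omega
    simp [this, sieveDensity]
  | succ k ih =>
    have herase : 1 ≤ (2 * k + 1) * sieveDensity (s.erase (2 * k + 3)) ^ 2 := by
      refine ih fun m hm => ?_
      have hm' := hs m (mem_of_mem_erase hm)
      obtain ⟨j, rfl⟩ := hm'.1
      have := ne_of_mem_erase hm
      exact ⟨hm'.1, by omega⟩
    push_cast
    by_cases hmem : 2 * k + 3 ∈ s
    · have hfactor : (2 * k + 1 : ℝ) ≤
          (2 * (k + 1) + 1) * (1 - 1 / ((2 * k + 3 : ℕ) : ℝ)) ^ 2 := by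
        push_cast
        field_simp
        nlinarith
      rw [sieveDensity_eq_mul_erase hmem, mul_pow, ← mul_assoc]
      exact herase.trans (by gcongr)
    · rw [erase_eq_of_notMem hmem] at herase
      nlinarith [sq_nonneg (sieveDensity s)]

theorem sqrt_le_two_mul_sieveDensity_mul {s : Finset ℕ} (hs : ∀ p ∈ s, p.Prime) {y : ℕ}
    (hy : ∀ p ∈ s, p ≤ y) : √y ≤ 2 * (sieveDensity s * y) := by
  obtain rfl | hpos := y.eq_zero_or_pos
  · simp
  have hodd : 1 ≤ (2 * ((y - 1) / 2 : ℕ) + 1) * sieveDensity (s.erase 2) ^ 2 := by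
    refine one_le_mul_sieveDensity_sq_of_odd _ fun p hp => ?_
    have hps := mem_of_mem_erase hp
    have hpodd := (hs p hps).odd_of_ne_two (ne_of_mem_erase hp)
    have hpy := hy p hps
    refine ⟨hpodd, (hs p hps).one_lt, ?_⟩
    obtain ⟨j, rfl⟩ := hpodd
    omega
  have hle : (2 * ((y - 1) / 2 : ℕ) + 1 : ℝ) ≤ y := by
    have : 2 * ((y - 1) / 2) + 1 ≤ y := by omega
    exact_mod_cast this
  have hσ := sieveDensity_nonneg s
  have htwo : sieveDensity (s.erase 2) ≤ 2 * sieveDensity s := by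
    by_cases hmem : 2 ∈ s
    · rw [sieveDensity_eq_mul_erase hmem]
      push_cast
      linarith
    · rw [erase_eq_of_notMem hmem]
      linarith
  have hone : 1 ≤ y * (2 * sieveDensity s) ^ 2 :=
    hodd.trans (mul_le_mul hle (pow_le_pow_left₀ (sieveDensity_nonneg _) htwo 2) (sq_nonneg _)
      (Nat.cast_nonneg _))
  refine Real.sqrt_le_iff.2 ⟨by positivity, ?_⟩
  calc (y : ℝ) = y * 1 := (mul_one _).symm
    _ ≤ y * (y * (2 * sieveDensity s) ^ 2) := by gcongr
    _ = (2 * (sieveDensity s * y)) ^ 2 := by ring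

end Density

end Sieve

section SiftedIntervals

open Finset

theorem mem_primesUpTo {t : ℝ} {p : ℕ} : p ∈ primesUpTo t ↔ p.Prime ∧ (p : ℝ) ≤ t := by
  simp only [primesUpTo, mem_filter, mem_range, Nat.lt_succ_iff, and_iff_right_iff_imp]
  exact fun h => Nat.le_floor h.2

theorem inS_iff_survives {t : ℝ} {b n : ℤ} : inS t b n ↔ Survives (primesUpTo t) b n := by
  simp only [inS, Survives, mem_primesUpTo, and_imp]

theorem countS_eq_survivorCount (t : ℝ) (b lo hi : ℤ) :
    countS t b lo hi = survivorCount (primesUpTo t) (Icc lo hi) b := by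
  simp only [countS, survivorCount, inS_iff_survives]

theorem countS_neg_sub (t : ℝ) (N b lo hi : ℤ) :
    countS t (-N - b) lo hi = countS t b (-N - hi) (-N - lo) := by
  refine card_equiv (Equiv.subLeft (-N)) fun n => ?_
  simp only [Equiv.subLeft_apply, mem_filter, mem_Icc, inS]
  refine and_congr (by omega) (forall₃_congr fun p _ _ => not_congr ?_)
  rw [← dvd_neg]
  ring_nf

theorem card_lt_countS_mul_sqrt_le {t : ℝ} {y : ℕ} (hty : t ≤ y) {lo hi : ℤ}
    (hy : hi + 1 - lo = y) :
    (#{b ∈ range (PP t) | 2 * sigUpTo t * y < countS t (b : ℕ) lo hi} : ℝ) * √y ≤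
      2 * PP t := by
  have hprime : ∀ p ∈ primesUpTo t, p.Prime := fun p hp => (mem_primesUpTo.1 hp).1
  have hle : ∀ p ∈ primesUpTo t, p ≤ y := fun p hp => by
    exact_mod_cast (mem_primesUpTo.1 hp).2.trans hty
  have hcop : (primesUpTo t : Set ℕ).Pairwise Nat.Coprime := fun p hp q hq hpq =>
    (Nat.coprime_primes (hprime p hp) (hprime q hq)).2 hpq
  have hcard := card_lt_survivorCount_mul_le hcop (fun p hp => (hprime p hp).two_le)
    (lo := lo) (hi := hi)
  have hsqrt := sqrt_le_two_mul_sieveDensity_mul hprime hle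
  rw [Int.card_Icc, hy, Int.toNat_natCast] at hcard
  simp only [countS_eq_survivorCount]
  refine (mul_le_mul_of_nonneg_left hsqrt (Nat.cast_nonneg _)).trans ?_
  rw [mul_left_comm]
  exact mul_le_mul_of_nonneg_left hcard zero_le_two

end SiftedIntervals

section Asymptotics

open Filter

theorem eventually_log_rpow_le_sqrt_yy (δ A : ℝ) :
    ∀ᶠ x : ℝ in atTop, Real.log x ^ A ≤ √(yy δ x) := by
  have hlittle := (isLittleO_log_rpow_rpow_atTop (2 * A - δ) one_pos).eventuallyLE
  filter_upwards [hlittle, Real.tendsto_log_atTop.eventually_gt_atTop 0, eventually_ge_atTop 0]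
    with x hx hlog hx0
  rw [Real.rpow_one, Real.norm_of_nonneg (by positivity), Real.norm_of_nonneg hx0] at hx
  refine Real.le_sqrt_of_sq_le ?_
  calc (Real.log x ^ A) ^ 2
      = Real.log x ^ (2 * A - δ) * Real.log x ^ δ := by
        rw [← Real.rpow_add hlog, ← Real.rpow_mul_natCast hlog.le]
        congr 1
        push_cast
        ring
    _ ≤ x * Real.log x ^ δ := by gcongr
    _ ≤ yy δ x := Nat.le_ceil _

theorem eventually_zz_le_yy (δ : ℝ) : ∀ᶠ x : ℝ in atTop, zz δ x ≤ yy δ x := by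
  have hlittle := (isLittleO_log_rpow_rpow_atTop 2 one_half_pos).eventuallyLE
  filter_upwards [Real.tendsto_log_atTop.eventually hlittle,
    Real.tendsto_log_atTop.eventually_gt_atTop 0] with x hx hlog
  rw [Real.rpow_two, Real.norm_of_nonneg (sq_nonneg _), Real.norm_of_nonneg (by positivity)] at hx
  rw [zz, div_le_iff₀ (by positivity)]
  gcongr

end Asymptotics

/-- `(Finset.range k).filter q` with `q` a predicate on `ℤ` elaborates to this monadic
expression. -/
theorem card_filter_bind_pure_natCast (s : Finset ℕ) (q : ℤ → Prop) [DecidablePred q] :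
    ((do let a ← s; pure (a : ℤ) : Finset ℤ).filter q).card =
      (s.filter fun b : ℕ => q b).card := by
  have hmap : (do let a ← s; pure (a : ℤ) : Finset ℤ) = s.map Nat.castEmbedding := by
    ext
    simp [eq_comm]
  rw [hmap, Finset.filter_map, Finset.card_map]
  rfl

theorem stmt13_general (δ A : ℝ) :
    ∀ᶠ x : ℝ in Filter.atTop, ∀ N : ℤ,
      (((Finset.range (PP (zz δ x))).filter fun b : ℕ =>
          2 * sigUpTo (zz δ x) * (yy δ x : ℝ) < (countS (zz δ x) b 1 (yy δ x) : ℝ)).card : ℝ) ≤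
        2 * PP (zz δ x) / Real.log x ^ A ∧
      (((Finset.range (PP (zz δ x))).filter fun b : ℕ =>
          2 * sigUpTo (zz δ x) * (yy δ x : ℝ) <
            (countS (zz δ x) (-N - b) (-(yy δ x : ℤ)) (-1) : ℝ)).card : ℝ) ≤
        2 * PP (zz δ x) / Real.log x ^ A := by
  filter_upwards [eventually_zz_le_yy δ, eventually_log_rpow_le_sqrt_yy δ A,
    Real.tendsto_log_atTop.eventually_gt_atTop 0] with x hzy hlog hpos N
  have hbound {lo hi : ℤ} (hy : hi + 1 - lo = yy δ x) :
      (((Finset.range (PP (zz δ x))).filter fun b : ℕ =>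
        2 * sigUpTo (zz δ x) * (yy δ x : ℝ) < (countS (zz δ x) b lo hi : ℝ)).card : ℝ) ≤
        2 * PP (zz δ x) / Real.log x ^ A := by
    rw [le_div_iff₀ (by positivity)]
    exact (mul_le_mul_of_nonneg_left hlog (Nat.cast_nonneg _)).trans
      (card_lt_countS_mul_sqrt_le hzy hy)
  simp only [countS_neg_sub]
  exact ⟨hbound (by ring), hbound (by ring)⟩

theorem stmt13 (δ : ℝ) (hδ0 : 0 < δ) (hδ1 : δ < 1/2) :
    ∃ C : ℝ, 0 < C ∧ ∃ x₀ : ℝ, ∀ x ≥ x₀, ∀ N : ℤ,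
      ((((Finset.range (PP (zz δ x))).filter (fun b =>
          2 * sigUpTo (zz δ x) * (yy δ x : ℝ) <
            (countS (zz δ x) (b : ℤ) 1 (yy δ x) : ℝ))).card : ℝ) ≤
        C * (PP (zz δ x) : ℝ) / Real.log x) ∧
      ((((Finset.range (PP (zz δ x))).filter (fun b =>
          2 * sigUpTo (zz δ x) * (yy δ x : ℝ) <
            (countS (zz δ x) (-N - (b : ℤ)) (-(yy δ x : ℤ)) (-1) : ℝ))).card : ℝ) ≤
        C * (PP (zz δ x) : ℝ) / Real.log x) := by
  obtain ⟨x₀, hx₀⟩ := Filter.eventually_atTop.1 (stmt13_general δ 1)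
  exact ⟨2, two_pos, x₀, by simpa only [card_filter_bind_pure_natCast, Real.rpow_one] using hx₀⟩
end
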